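/- arXiv:2509.18931 — 2 statements merged into one kernel-verified Lean document; each statement's English description precedes it below -/
import Mathlib

section
/- For every x ∈ ℕ, the limiting probability mass function admits the explicit expression ∫₀^∞ ∫₀^∞ ((z·z')^x / x!) · e^{−z·z'} · e^{−z} · e^{−z'} dz dz' = Σ_{k=0}^{x} C(x,k) · (δ − Σ_{r=0}^{k−1} (−1)^r · r!) / k!, where δ is the Gompertz constant. In particular the value at x = 0 equals δ. -/
open MeasureTheory

/-- The Gompertz constant `δ = ∫₀^∞ e^{-z} / (1+z) dz`. -/
noncomputable def gompertz : ℝ :=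
  ∫ z in Set.Ioi (0:ℝ), Real.exp (-z) / (1 + z)

/-! Integrating out `z'` turns the double integral into `∫₀^∞ e^{-z} z^x / (1+z)^{x+1} dz`: an
exponential mixture of Poisson laws is geometric. Writing `z = (1+z) - 1` and expanding binomially
leaves the integrals `∫₀^∞ e^{-z} / (1+z)^{k+1} dz`, and integration by parts relates consecutive
ones, so that each of them reduces to `δ`. -/

open Set Real

/-- The integral `∫₀^∞ e^{-z} / (a+z)^n dz`, which for `0 < a` is `e^a a^{1-n} E_n(a)`, with `E_n`
the generalized exponential integral. The unnormalized form turns integration by parts into a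
recurrence in `n` with coefficients free of `e^a`. -/
noncomputable def shiftedExpIntegral (a : ℝ) (n : ℕ) : ℝ :=
  ∫ z in Ioi (0 : ℝ), exp (-z) / (a + z) ^ n

theorem gompertz_eq_shiftedExpIntegral : gompertz = shiftedExpIntegral 1 1 := by
  simp only [gompertz, shiftedExpIntegral, pow_one]

section ShiftedExpIntegral

variable {a : ℝ}

theorem hasDerivAt_exp_neg_div_add_pow {z : ℝ} (h : a + z ≠ 0) (n : ℕ) :
    HasDerivAt (fun z ↦ exp (-z) / (a + z) ^ n)
      (-(exp (-z) / (a + z) ^ n + n * (exp (-z) / (a + z) ^ (n + 1)))) z := by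
  have hexp : HasDerivAt (fun z : ℝ ↦ exp (-z)) (exp (-z) * -1) z := (hasDerivAt_neg z).exp
  have hpow : HasDerivAt (fun z ↦ (a + z) ^ n) (n * (a + z) ^ (n - 1) * 1) z :=
    ((hasDerivAt_id z).const_add a).pow n
  refine (hexp.div hpow (pow_ne_zero n h)).congr_deriv ?_
  cases n with
  | zero => simp
  | succ n =>
    rw [Nat.add_sub_cancel]
    field_simp
    ring

theorem integrableOn_exp_neg_div_add_pow (ha : 0 < a) (n : ℕ) :
    IntegrableOn (fun z ↦ exp (-z) / (a + z) ^ n) (Ioi 0) := by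
  have hpos : ∀ z ∈ Ioi (0 : ℝ), 0 < a + z := fun z hz ↦ add_pos ha hz
  have hcont : ContinuousOn (fun z ↦ exp (-z) / (a + z) ^ n) (Ioi 0) :=
    ContinuousOn.div (by fun_prop) (by fun_prop) fun z hz ↦ (pow_pos (hpos z hz) n).ne'
  refine ((integrableOn_exp_neg_Ioi 0).div_const (a ^ n)).mono'
    (hcont.aestronglyMeasurable measurableSet_Ioi) ?_
  filter_upwards [ae_restrict_mem measurableSet_Ioi] with z hz
  have := hpos z hz
  rw [norm_of_nonneg (by positivity)]
  gcongr
  exact le_add_of_nonneg_right (le_of_lt hz)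

theorem shiftedExpIntegral_add_mul_succ (ha : 0 < a) (n : ℕ) :
    shiftedExpIntegral a n + n * shiftedExpIntegral a (n + 1) = 1 / a ^ n := by
  have hfi := integrableOn_exp_neg_div_add_pow ha n
  have hfi_succ := (integrableOn_exp_neg_div_add_pow ha (n + 1)).const_mul (n : ℝ)
  have hfi_deriv := (hfi.add hfi_succ).neg
  have hderiv : ∀ z ∈ Ici (0 : ℝ), HasDerivAt (fun z ↦ exp (-z) / (a + z) ^ n)
      (-(exp (-z) / (a + z) ^ n + n * (exp (-z) / (a + z) ^ (n + 1)))) z := fun z hz ↦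
    hasDerivAt_exp_neg_div_add_pow (add_pos_of_pos_of_nonneg ha hz).ne' n
  have hlim := tendsto_zero_of_hasDerivAt_of_integrableOn_Ioi
    (fun z hz ↦ hderiv z (Ioi_subset_Ici_self hz)) hfi_deriv hfi
  have hftc := integral_Ioi_of_hasDerivAt_of_tendsto' hderiv hfi_deriv hlim
  rw [integral_neg, integral_add hfi hfi_succ, integral_const_mul] at hftc
  rw [zero_sub, neg_zero, exp_zero, add_zero] at hftc
  exact neg_injective hftc

theorem neg_one_pow_mul_shiftedExpIntegral_succ (ha : 0 < a) (n : ℕ) :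
    (-1) ^ n * shiftedExpIntegral a (n + 1) =
      (shiftedExpIntegral a 1 - ∑ r ∈ Finset.range n, (-1) ^ r * r.factorial / a ^ (r + 1)) /
        n.factorial := by
  induction n with
  | zero => simp
  | succ n ih =>
    have hrec := shiftedExpIntegral_add_mul_succ ha (n + 1)
    rw [eq_div_iff (by positivity)] at ih ⊢
    rw [Finset.sum_range_succ, Nat.factorial_succ]
    push_cast at hrec ⊢
    linear_combination ih - (-1) ^ n * n.factorial * hrec

end ShiftedExpIntegral

theorem integral_pow_mul_exp_neg_mul_Ioi {r : ℝ} (hr : 0 < r) (n : ℕ) :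
    ∫ t in Ioi (0 : ℝ), t ^ n * exp (-(r * t)) = n.factorial / r ^ (n + 1) := by
  have h := integral_rpow_mul_exp_neg_mul_Ioi (a := n + 1) (by positivity) hr
  simp only [add_sub_cancel_right, rpow_natCast, Gamma_nat_eq_factorial] at h
  rw [h, ← Nat.cast_succ, rpow_natCast, one_div_pow, one_div_mul_eq_div]

theorem integral_poisson_mul_exp_neg_mul_Ioi {a b : ℝ} (h : 0 < a + b) (n : ℕ) :
    ∫ t in Ioi (0 : ℝ), (b * t) ^ n / n.factorial * exp (-(b * t)) * exp (-(a * t)) =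
      b ^ n / (a + b) ^ (n + 1) := by
  have hfactor (t : ℝ) : (b * t) ^ n / n.factorial * exp (-(b * t)) * exp (-(a * t)) =
      b ^ n / n.factorial * (t ^ n * exp (-((a + b) * t))) := by
    rw [mul_assoc, ← exp_add, mul_pow]
    ring_nf
  simp_rw [hfactor]
  rw [integral_const_mul, integral_pow_mul_exp_neg_mul_Ioi h]
  field_simp

theorem pow_div_add_pow_succ {K : Type*} [Field K] {a z : K} (h : a + z ≠ 0) (n : ℕ) :
    z ^ n / (a + z) ^ (n + 1) =
      ∑ k ∈ Finset.range (n + 1), n.choose k * ((-a) ^ k / (a + z) ^ (k + 1)) := by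
  have hdiv : z / (a + z) = -a / (a + z) + 1 := by field_simp; ring
  rw [pow_succ, ← div_div, ← div_pow, hdiv, add_pow, Finset.sum_div]
  refine Finset.sum_congr rfl fun k _ ↦ ?_
  rw [one_pow, mul_one, div_pow, pow_succ (a + z) k]
  field_simp

theorem integral_exp_neg_mul_pow_div_add_pow_succ {a : ℝ} (ha : 0 < a) (n : ℕ) :
    ∫ z in Ioi (0 : ℝ), exp (-z) * (z ^ n / (a + z) ^ (n + 1)) =
      ∑ k ∈ Finset.range (n + 1), n.choose k * ((-a) ^ k * shiftedExpIntegral a (k + 1)) := by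
  have hexpand : EqOn (fun z ↦ exp (-z) * (z ^ n / (a + z) ^ (n + 1)))
      (fun z ↦ ∑ k ∈ Finset.range (n + 1),
        n.choose k * ((-a) ^ k * (exp (-z) / (a + z) ^ (k + 1)))) (Ioi 0) := by
    intro z hz
    simp only [pow_div_add_pow_succ (add_pos ha hz).ne' n, Finset.mul_sum]
    exact Finset.sum_congr rfl fun k _ ↦ by ring
  rw [setIntegral_congr_fun measurableSet_Ioi hexpand, integral_finsetSum _ fun k _ ↦
    ((integrableOn_exp_neg_div_add_pow ha (k + 1)).const_mul _).const_mul _]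
  simp only [integral_const_mul, shiftedExpIntegral]

/-- The limiting probability mass function: for every `x ∈ ℕ`,
`∫₀^∞∫₀^∞ ((zz')^x/x!) e^{-zz'} e^{-z} e^{-z'} dz dz'
  = Σ_{k=0}^x C(x,k) (δ - Σ_{r=0}^{k-1} (-1)^r r!) / k!`,
and in particular the value at `x = 0` equals the Gompertz constant `δ`. -/
theorem limiting_pmf_gompertz :
    (∀ x : ℕ,
      (∫ z in Set.Ioi (0:ℝ), ∫ z' in Set.Ioi (0:ℝ),
          ((z * z') ^ x / (x.factorial : ℝ)) * Real.exp (-(z * z'))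
            * Real.exp (-z) * Real.exp (-z'))
        = ∑ k ∈ Finset.range (x + 1), (x.choose k : ℝ)
            * ((gompertz - ∑ r ∈ Finset.range k, (-1 : ℝ) ^ r * (r.factorial : ℝ))
              / (k.factorial : ℝ))) ∧
    (∫ z in Set.Ioi (0:ℝ), ∫ z' in Set.Ioi (0:ℝ),
        ((z * z') ^ 0 / ((0:ℕ).factorial : ℝ)) * Real.exp (-(z * z'))
          * Real.exp (-z) * Real.exp (-z'))
      = gompertz := by
  refine (and_iff_left_of_imp fun pmf ↦ (pmf 0).trans (by simp)).2 fun x ↦ ?_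
  have integrate_out (z : ℝ) (hz : 0 < z) :
      (∫ z' in Ioi (0 : ℝ), (z * z') ^ x / (x.factorial : ℝ) * exp (-(z * z')) * exp (-z) *
        exp (-z')) = exp (-z) * (z ^ x / (1 + z) ^ (x + 1)) := by
    simp_rw [mul_right_comm _ (exp (-z)), mul_comm _ (exp (-z))]
    rw [integral_const_mul, ← integral_poisson_mul_exp_neg_mul_Ioi (by positivity) x]
    simp only [one_mul]
  rw [setIntegral_congr_fun measurableSet_Ioi integrate_out,
    integral_exp_neg_mul_pow_div_add_pow_succ one_pos]
  refine Finset.sum_congr rfl fun k _ ↦ ?_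
  rw [neg_one_pow_mul_shiftedExpIntegral_succ one_pos, gompertz_eq_shiftedExpIntegral]
  simp only [one_pow, div_one]
end

section
/- The second moment of the number of accessible direct paths converges to 5: lim_{n→∞} E[X_n²] = 5. -/
open MeasureTheory Filter

namespace RandomHypercube

/-- Index of a (potential) hypercube edge: the lower endpoint `A` together with the
direction `i` that is added, representing the edge from `A` to `A ∪ {i}`. -/
abbrev EdgeIdx (n : ℕ) := Finset (Fin n) × Fin n

/-- The sample space: an i.i.d. Uniform[0,1] weight for each edge index. -/
abbrev CubeOmega (n : ℕ) := EdgeIdx n → ℝ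

/-- The product of uniform measures on [0,1], one for each edge. -/
noncomputable def cubeMeasure (n : ℕ) : Measure (CubeOmega n) :=
  Measure.pi fun _ => (volume : Measure ℝ).restrict (Set.Icc 0 1)

/-- The vertex visited by the direct path associated to the permutation `σ`
just before taking its `j`-th step: the image under `σ` of `{0, …, j-1}`. -/
def initSeg (n : ℕ) (σ : Equiv.Perm (Fin n)) (j : Fin n) : Finset (Fin n) :=
  (Finset.univ.filter fun i => i < j).image σ

/-- The edge used in the `j`-th step of the direct path associated to `σ`. -/
def pathEdge (n : ℕ) (σ : Equiv.Perm (Fin n)) (j : Fin n) : EdgeIdx n :=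
  (initSeg n σ j, σ j)

/-- The direct path associated to `σ` is accessible if its successive edge
weights are strictly increasing. -/
def Accessible (n : ℕ) (σ : Equiv.Perm (Fin n)) (ω : CubeOmega n) : Prop :=
  StrictMono fun j : Fin n => ω (pathEdge n σ j)

/-- The number of accessible direct paths from `∅` to `[n]`. -/
noncomputable def X (n : ℕ) (ω : CubeOmega n) : ℕ :=
  Nat.card {σ : Equiv.Perm (Fin n) // Accessible n σ ω}

end RandomHypercube

/-!
By symmetry `E[X ^ 2] = n! ∑ σ, P(the paths of 1 and σ are both accessible)`, and the paths of `1`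
and `σ` share exactly the edges at the strong fixed points of `σ`. Given the shared weights, the
stretches between consecutive shared edges are independent, and a stretch of `l` private edges per
path has the probability of an increasing run of length `2 * l`, up to the factor
`(2 * l).choose l`. Summing over `σ` with `k` shared and `m` private edges turns the second moment
into `∑ T k m` over `k + m = n`, with

`T k m = (k + m)! * [x ^ m] H ^ (k + 1) / (k + 2 * m)!`,  `H = ∑ m, c m * (2 * m).choose m * x ^ m`,

where `c m ∼ m!` counts the permutations of `m` points without strong fixed points. As `m → ∞`,
`T k m → (k + 1) / 2 ^ k`, because one of the `k + 1` stretches contains all private edges; as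
`k → ∞`, `T k m` tends to `1` if `m = 0` and to `0` otherwise. The sum is dominated by geometric
series at both ends, so the second moment tends to `∑ k, (k + 1) / 2 ^ k + 1 = 5`.
-/

namespace RandomHypercube

open Finset.HasAntidiagonal (antidiagonal mem_antidiagonal)

section StrongFixedPoints

variable {n a b : ℕ}

/-- A strong fixed point of `σ`: a fixed point `j` such that `σ` preserves `{i | i < j}`. The direct
paths of `σ` and `τ` share their `j`-th edge exactly when `j` is a strong fixed point of
`σ⁻¹ * τ`. -/
def IsStrongFixedPoint (σ : Equiv.Perm (Fin n)) (j : Fin n) : Prop :=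
  (∀ i < j, σ i < j) ∧ σ j = j

instance (σ : Equiv.Perm (Fin n)) (j : Fin n) : Decidable (IsStrongFixedPoint σ j) :=
  inferInstanceAs (Decidable (_ ∧ _))

lemma pathEdge_one_eq_iff (σ : Equiv.Perm (Fin n)) (j : Fin n) :
    pathEdge n 1 j = pathEdge n σ j ↔ IsStrongFixedPoint σ j := by
  have image_eq_iff : (Finset.univ.filter (· < j)).image σ = Finset.univ.filter (· < j) ↔
      ∀ i < j, σ i < j := by
    refine ⟨fun h i hi ↦ ?_, fun h ↦ Finset.eq_of_subset_of_card_le ?_ ?_⟩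
    · have hi' : i ∈ Finset.univ.filter (· < j) := by simpa using hi
      simpa [h] using Finset.mem_image_of_mem σ hi'
    · simpa [Finset.subset_iff] using h
    · rw [Finset.card_image_of_injective _ σ.injective]
  simp [pathEdge, initSeg, IsStrongFixedPoint, ← image_eq_iff, eq_comm]

lemma pathEdge_eq_iff (σ τ : Equiv.Perm (Fin n)) (j : Fin n) :
    pathEdge n σ j = pathEdge n τ j ↔ IsStrongFixedPoint (σ⁻¹ * τ) j := by
  have image_mul (ρ : Equiv.Perm (Fin n)) :
      initSeg n (σ⁻¹ * ρ) j = (initSeg n ρ j).image ⇑σ⁻¹ := by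
    simp [initSeg, Finset.image_image]
  rw [← pathEdge_one_eq_iff, ← inv_mul_cancel σ, pathEdge, pathEdge, pathEdge, pathEdge,
    image_mul, image_mul, Prod.mk.injEq, Prod.mk.injEq,
    (Finset.image_injective (Equiv.injective σ⁻¹)).eq_iff, Equiv.Perm.mul_apply,
    Equiv.Perm.mul_apply, (Equiv.injective σ⁻¹).eq_iff]

/-- The indicator sequence of the strong fixed points of `σ`, as a list so that patterns of
permutations of different sizes can be concatenated. -/
def strongFixedPattern (σ : Equiv.Perm (Fin n)) : List Bool :=
  List.ofFn fun j ↦ decide (IsStrongFixedPoint σ j)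

@[simp] lemma length_strongFixedPattern (σ : Equiv.Perm (Fin n)) :
    (strongFixedPattern σ).length = n := by
  simp [strongFixedPattern]

/-- The direct sum of two permutations, acting by the first on the initial block `Fin a` and by the
second on the final block `Fin b`. -/
def directSum (p : Equiv.Perm (Fin a) × Equiv.Perm (Fin b)) : Equiv.Perm (Fin (a + b)) :=
  finSumFinEquiv.permCongr (Equiv.Perm.sumCongrHom _ _ p)

@[simp] lemma directSum_castAdd (p : Equiv.Perm (Fin a) × Equiv.Perm (Fin b)) (i : Fin a) :
    directSum p (Fin.castAdd b i) = Fin.castAdd b (p.1 i) := by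
  simp [directSum, Equiv.permCongr_apply]

@[simp] lemma directSum_natAdd (p : Equiv.Perm (Fin a) × Equiv.Perm (Fin b)) (i : Fin b) :
    directSum p (Fin.natAdd a i) = Fin.natAdd a (p.2 i) := by
  simp [directSum, Equiv.permCongr_apply]

lemma directSum_injective : Function.Injective (directSum (a := a) (b := b)) :=
  finSumFinEquiv.permCongr.injective.comp Equiv.Perm.sumCongrHom_injective

lemma exists_directSum_eq (σ : Equiv.Perm (Fin (a + b)))
    (h : ∀ i : Fin a, (σ (Fin.castAdd b i) : ℕ) < a) : ∃ p, directSum p = σ := by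
  have mapsTo_inl : Set.MapsTo (finSumFinEquiv.symm.permCongr σ)
      (Set.range (Sum.inl : Fin a → Fin a ⊕ Fin b)) (Set.range Sum.inl) := by
    rintro _ ⟨i, rfl⟩
    refine ⟨⟨_, h i⟩, ?_⟩
    simp [Equiv.permCongr_apply, Equiv.eq_symm_apply]
  obtain ⟨p, hp⟩ := Equiv.Perm.mem_sumCongrHom_range_of_perm_mapsTo_inl mapsTo_inl
  refine ⟨p, ?_⟩
  rw [directSum, hp]
  ext i
  simp [Equiv.permCongr_apply]

lemma strongFixedPattern_directSum (p : Equiv.Perm (Fin a) × Equiv.Perm (Fin b)) :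
    strongFixedPattern (directSum p) = strongFixedPattern p.1 ++ strongFixedPattern p.2 := by
  have castAdd_iff (j : Fin a) :
      IsStrongFixedPoint (directSum p) (Fin.castAdd b j) ↔ IsStrongFixedPoint p.1 j := by
    simp only [IsStrongFixedPoint, Fin.lt_def, Fin.val_castAdd, Fin.forall_fin_add,
      directSum_castAdd, Fin.val_natAdd, directSum_natAdd, Fin.ext_iff]
    grind
  have natAdd_iff (j : Fin b) :
      IsStrongFixedPoint (directSum p) (Fin.natAdd a j) ↔ IsStrongFixedPoint p.2 j := by
    simp only [IsStrongFixedPoint, Fin.lt_def, Fin.val_natAdd, Fin.forall_fin_add, Fin.val_castAdd,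
      directSum_castAdd, add_lt_add_iff_left, directSum_natAdd, Fin.ext_iff]
    grind
  refine List.ofFn_add.trans (congrArg₂ _ ?_ ?_)
  · exact congrArg List.ofFn (funext fun j ↦ decide_eq_decide.2 (castAdd_iff j))
  · exact congrArg List.ofFn (funext fun j ↦ decide_eq_decide.2 (natAdd_iff j))

lemma strongFixedPattern_fin_one (σ : Equiv.Perm (Fin 1)) : strongFixedPattern σ = [true] := by
  simp [strongFixedPattern, IsStrongFixedPoint, Fin.fin_one_eq_zero]

/-- The permutations of `Fin n` without strong fixed points, as a finset. -/
def strongFixedFree (n : ℕ) : Finset (Equiv.Perm (Fin n)) :=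
  Finset.univ.filter fun σ ↦ ∀ j, ¬ IsStrongFixedPoint σ j

lemma strongFixedPattern_eq_replicate_iff {σ : Equiv.Perm (Fin n)} :
    strongFixedPattern σ = List.replicate n false ↔ σ ∈ strongFixedFree n := by
  simp [strongFixedPattern, strongFixedFree, List.eq_replicate_iff]

lemma true_notMem_strongFixedPattern_iff {σ : Equiv.Perm (Fin n)} :
    true ∉ strongFixedPattern σ ↔ σ ∈ strongFixedFree n := by
  simp [strongFixedPattern, strongFixedFree, List.mem_ofFn]

/-- Inserts a strong fixed point between the two blocks of a direct sum. -/
def insertStrongFixed (p : Equiv.Perm (Fin a) × Equiv.Perm (Fin b)) :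
    Equiv.Perm (Fin (a + 1 + b)) :=
  directSum (directSum (p.1, 1), p.2)

lemma strongFixedPattern_insertStrongFixed (p : Equiv.Perm (Fin a) × Equiv.Perm (Fin b)) :
    strongFixedPattern (insertStrongFixed p) =
      strongFixedPattern p.1 ++ true :: strongFixedPattern p.2 := by
  simp [insertStrongFixed, strongFixedPattern_directSum, strongFixedPattern_fin_one]

lemma insertStrongFixed_injective : Function.Injective (insertStrongFixed (a := a) (b := b)) := by
  intro p q h
  have outer := Prod.mk.inj (directSum_injective h)
  exact Prod.ext (Prod.mk.inj (directSum_injective outer.1)).1 outer.2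

lemma exists_insertStrongFixed_eq (σ : Equiv.Perm (Fin (a + 1 + b)))
    (h : IsStrongFixedPoint σ (Fin.castAdd b (Fin.last a))) : ∃ p, insertStrongFixed p = σ := by
  obtain ⟨p, rfl⟩ := exists_directSum_eq σ fun i ↦ by
    rcases (Fin.le_last i).lt_or_eq with hi | rfl
    · exact (Fin.lt_def.1 (h.1 (Fin.castAdd b i) hi)).trans (by simp)
    · simp [h.2]
  obtain ⟨q, hq⟩ := exists_directSum_eq p.1 fun i ↦ by
    have := h.1 (Fin.castAdd b i.castSucc) i.is_lt
    rwa [directSum_castAdd] at this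
  refine ⟨(q.1, p.2), ?_⟩
  rw [insertStrongFixed, ← Subsingleton.elim q.2 1, hq]

lemma filter_idxOf_strongFixedPattern_eq_image (j r : ℕ) :
    (Finset.univ.filter fun σ : Equiv.Perm (Fin (j + 1 + r)) ↦
        (strongFixedPattern σ).idxOf true = j) =
      (strongFixedFree j ×ˢ Finset.univ).image insertStrongFixed := by
  ext σ
  simp only [Finset.mem_filter, Finset.mem_univ, true_and, Finset.mem_image, Finset.mem_product,
    and_true, ← true_notMem_strongFixedPattern_iff]
  constructor
  · intro h
    have idxOf_lt : (strongFixedPattern σ).idxOf true < (strongFixedPattern σ).length := by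
      simp only [h, length_strongFixedPattern]; omega
    have getElem_idxOf := List.getElem_idxOf idxOf_lt
    simp only [h] at getElem_idxOf
    simp only [strongFixedPattern, List.getElem_ofFn, decide_eq_true_eq] at getElem_idxOf
    obtain ⟨p, rfl⟩ := exists_insertStrongFixed_eq σ getElem_idxOf
    refine ⟨p, fun mem ↦ ?_, rfl⟩
    have idxOf_lt_left := List.idxOf_lt_length_iff.2 mem
    rw [strongFixedPattern_insertStrongFixed, List.idxOf_append_of_mem mem] at h
    simp [h] at idxOf_lt_left
  · rintro ⟨p, hp, rfl⟩
    simp [strongFixedPattern_insertStrongFixed, List.idxOf_append_of_notMem hp]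

lemma sum_filter_idxOf_strongFixedPattern {M : Type*} [AddCommMonoid M] {N j r : ℕ}
    (hN : j + 1 + r = N) (f : List Bool → M) :
    ∑ σ : Equiv.Perm (Fin N) with (strongFixedPattern σ).idxOf true = j,
        f (strongFixedPattern σ) =
      (strongFixedFree j).card • ∑ β : Equiv.Perm (Fin r),
        f (List.replicate j false ++ true :: strongFixedPattern β) := by
  subst hN
  rw [filter_idxOf_strongFixedPattern_eq_image,
    Finset.sum_image insertStrongFixed_injective.injOn, Finset.sum_product, ← Finset.sum_const]
  refine Finset.sum_congr rfl fun α hα ↦ Finset.sum_congr rfl fun β _ ↦ ?_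
  rw [strongFixedPattern_insertStrongFixed, strongFixedPattern_eq_replicate_iff.2 hα]

-- Split according to the first strong fixed point.
lemma sum_strongFixedPattern_succ {M : Type*} [AddCommMonoid M] (n : ℕ) (f : List Bool → M) :
    ∑ σ : Equiv.Perm (Fin (n + 1)), f (strongFixedPattern σ) =
      (strongFixedFree (n + 1)).card • f (List.replicate (n + 1) false) +
      ∑ p ∈ antidiagonal n, (strongFixedFree p.1).card • ∑ β : Equiv.Perm (Fin p.2),
        f (List.replicate p.1 false ++ true :: strongFixedPattern β) := by
  have maps_to (σ : Equiv.Perm (Fin (n + 1))) (_ : σ ∈ Finset.univ) :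
      (strongFixedPattern σ).idxOf true ∈ Finset.range (n + 2) := by
    simpa [Nat.lt_succ_iff] using List.idxOf_le_length (a := true) (l := strongFixedPattern σ)
  have idxOf_eq_iff (σ : Equiv.Perm (Fin (n + 1))) :
      (strongFixedPattern σ).idxOf true = n + 1 ↔ σ ∈ strongFixedFree (n + 1) := by
    rw [← true_notMem_strongFixedPattern_iff, ← List.idxOf_eq_length_iff,
      length_strongFixedPattern]
  rw [← Finset.sum_fiberwise_of_maps_to maps_to, Finset.sum_range_succ, add_comm]
  congr 1
  · simp only [idxOf_eq_iff, Finset.filter_univ_mem, ← Finset.sum_const]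
    exact Finset.sum_congr rfl fun σ hσ ↦ by rw [strongFixedPattern_eq_replicate_iff.2 hσ]
  · rw [Finset.Nat.sum_antidiagonal_eq_sum_range_succ_mk]
    refine Finset.sum_congr rfl fun j hj ↦ sum_filter_idxOf_strongFixedPattern ?_ f
    have := Finset.mem_range.1 hj
    omega

lemma factorial_succ_eq_card_strongFixedFree_add (n : ℕ) :
    (n + 1).factorial = (strongFixedFree (n + 1)).card +
      ∑ p ∈ antidiagonal n, (strongFixedFree p.1).card * p.2.factorial := by
  simpa [Fintype.card_perm] using sum_strongFixedPattern_succ n fun _ ↦ (1 : ℕ)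

lemma card_strongFixedFree_zero : (strongFixedFree 0).card = 1 := by
  simp [strongFixedFree]

lemma card_strongFixedFree_one : (strongFixedFree 1).card = 0 := by
  simpa [card_strongFixedFree_zero] using factorial_succ_eq_card_strongFixedFree_add 0

lemma card_strongFixedFree_le_factorial (n : ℕ) : (strongFixedFree n).card ≤ n.factorial := by
  simpa [Fintype.card_perm] using (strongFixedFree n).card_le_univ

lemma factorial_succ_mul_factorial_succ_le (i j : ℕ) :
    (i + 1).factorial * (j + 1).factorial ≤ (i + j + 1).factorial := by
  induction j with
  | zero => simp
  | succ j ih =>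
    rw [Nat.factorial_succ (j + 1), mul_left_comm, ← add_assoc, Nat.factorial_succ (i + j + 1)]
    exact Nat.mul_le_mul (by omega) ih

lemma sum_antidiagonal_factorial_mul_factorial_le (n : ℕ) :
    ∑ p ∈ antidiagonal n, p.1.factorial * p.2.factorial ≤ 3 * n.factorial := by
  rcases n with _ | _ | n
  · simp
  · simp [Finset.Nat.sum_antidiagonal_succ]
  have inner_le : ∑ p ∈ antidiagonal n, (p.1 + 1).factorial * (p.2 + 1).factorial ≤
      (n + 1) * (n + 1).factorial := by
    calc ∑ p ∈ antidiagonal n, (p.1 + 1).factorial * (p.2 + 1).factorial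
        ≤ ∑ _p ∈ antidiagonal n, (n + 1).factorial := by
          refine Finset.sum_le_sum fun p hp ↦ ?_
          rw [← mem_antidiagonal.1 hp]
          exact factorial_succ_mul_factorial_succ_le p.1 p.2
      _ = (n + 1) * (n + 1).factorial := by simp
  rw [Finset.Nat.sum_antidiagonal_succ, Finset.Nat.sum_antidiagonal_succ']
  simp only [Nat.factorial_zero, one_mul, mul_one]
  have := Nat.factorial_succ (n + 1)
  linarith [Nat.zero_le (n + 1).factorial]

lemma factorial_succ_le_card_strongFixedFree_add (n : ℕ) :
    (n + 1).factorial ≤ (strongFixedFree (n + 1)).card + 3 * n.factorial := by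
  rw [factorial_succ_eq_card_strongFixedFree_add]
  gcongr
  refine le_trans ?_ (sum_antidiagonal_factorial_mul_factorial_le n)
  gcongr
  exact card_strongFixedFree_le_factorial _

lemma tendsto_card_strongFixedFree_div_factorial :
    Tendsto (fun n : ℕ ↦ ((strongFixedFree n).card : ℝ) / n.factorial) atTop (nhds 1) := by
  rw [← tendsto_add_atTop_iff_nat 1]
  have lower_tendsto : Tendsto (fun n : ℕ ↦ 1 - 3 * (1 / ((n : ℝ) + 1))) atTop (nhds 1) := by
    simpa using (tendsto_one_div_add_atTop_nhds_zero_nat (𝕜 := ℝ)).const_mul 3 |>.const_sub 1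
  refine tendsto_of_tendsto_of_tendsto_of_le_of_le lower_tendsto tendsto_const_nhds
    (fun n ↦ ?_) (fun n ↦ ?_)
  · have lower : ((n + 1).factorial : ℝ) ≤ (strongFixedFree (n + 1)).card + 3 * n.factorial :=
      mod_cast factorial_succ_le_card_strongFixedFree_add n
    rw [Nat.factorial_succ] at lower ⊢
    push_cast at lower ⊢
    rw [le_div_iff₀ (by positivity)]
    calc (1 - 3 * (1 / ((n : ℝ) + 1))) * ((n + 1) * n.factorial)
        = (n + 1) * n.factorial - 3 * n.factorial := by field_simp
      _ ≤ (strongFixedFree (n + 1)).card := by linarith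
  · exact div_le_one_of_le₀ (Nat.cast_le.2 (card_strongFixedFree_le_factorial _)) (by positivity)

end StrongFixedPoints

section GeneratingFunction

/-- The quadruple factorial numbers `(2 m)! / m!`, the growth scale of the generating function. -/
def quadrupleFactorial (m : ℕ) : ℕ := m.factorial * m.centralBinom

lemma quadrupleFactorial_pos (m : ℕ) : 0 < quadrupleFactorial m :=
  Nat.mul_pos m.factorial_pos m.centralBinom_pos

lemma quadrupleFactorial_mul_factorial (m : ℕ) :
    quadrupleFactorial m * m.factorial = (2 * m).factorial := by
  have := Nat.choose_mul_factorial_mul_factorial (n := 2 * m) (k := m) (by omega)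
  rw [show 2 * m - m = m by omega, ← Nat.centralBinom_eq_two_mul_choose] at this
  rw [quadrupleFactorial, ← this]
  ring

lemma quadrupleFactorial_succ (m : ℕ) :
    quadrupleFactorial (m + 1) = 2 * (2 * m + 1) * quadrupleFactorial m := by
  rw [quadrupleFactorial, quadrupleFactorial, Nat.factorial_succ, mul_comm (m + 1), mul_assoc,
    Nat.succ_mul_centralBinom_succ]
  ring

lemma quadrupleFactorial_mul_le (i j : ℕ) :
    quadrupleFactorial (i + 2) * quadrupleFactorial (j + 2) ≤
      12 * quadrupleFactorial (i + j + 2) := by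
  induction i with
  | zero => simp [quadrupleFactorial, Nat.centralBinom, Nat.choose]
  | succ i ih =>
    calc quadrupleFactorial (i + 2 + 1) * quadrupleFactorial (j + 2)
        = 2 * (2 * (i + 2) + 1) * (quadrupleFactorial (i + 2) * quadrupleFactorial (j + 2)) := by
          rw [quadrupleFactorial_succ, mul_assoc]
      _ ≤ 2 * (2 * (i + j + 2) + 1) * (12 * quadrupleFactorial (i + j + 2)) := by gcongr; omega
      _ = 12 * quadrupleFactorial (i + 1 + j + 2) := by
          rw [show i + 1 + j + 2 = i + j + 2 + 1 by ring, quadrupleFactorial_succ (i + j + 2)]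
          ring

open PowerSeries

lemma mul_coeff_mul_le_coeff_mul {R : Type*} [CommSemiring R] [PartialOrder R] [IsOrderedRing R]
    [CanonicallyOrderedAdd R] {c : R} {φ φ' ψ ψ' : R⟦X⟧}
    (hφ : ∀ m, c * coeff m φ ≤ coeff m φ') (hψ : ∀ m, coeff m ψ ≤ coeff m ψ') (m : ℕ) :
    c * coeff m (φ * ψ) ≤ coeff m (φ' * ψ') := by
  rw [coeff_mul, coeff_mul, Finset.mul_sum]
  refine Finset.sum_le_sum fun p _ ↦ ?_
  rw [← mul_assoc]
  exact mul_le_mul (hφ p.1) (hψ p.2) zero_le zero_le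

lemma coeff_one_add_pow {R : Type*} [CommSemiring R] (φ : R⟦X⟧) (K m : ℕ) :
    coeff m ((1 + φ) ^ K) = ∑ j ∈ Finset.range (K + 1), K.choose j * coeff m (φ ^ j) := by
  rw [add_comm, add_pow, map_sum]
  refine Finset.sum_congr rfl fun j _ ↦ ?_
  rw [one_pow, mul_one, ← map_natCast (C (R := R)), coeff_mul_C, mul_comm]

/-- The generating function of the quadruple factorials `(2 m)! / m!` with `m ≥ 2`. -/
noncomputable def quadrupleFactorialSeries : ℕ⟦X⟧ :=
  PowerSeries.X ^ 2 * PowerSeries.mk fun m ↦ quadrupleFactorial (m + 2)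

lemma coeff_quadrupleFactorialSeries_add_two (m : ℕ) :
    coeff (m + 2) quadrupleFactorialSeries = quadrupleFactorial (m + 2) := by
  rw [quadrupleFactorialSeries, coeff_X_pow_mul, coeff_mk]

lemma coeff_quadrupleFactorialSeries_le (m : ℕ) :
    coeff m quadrupleFactorialSeries ≤ quadrupleFactorial m := by
  rcases lt_or_ge m 2 with hm | hm
  · simp [quadrupleFactorialSeries, coeff_X_pow_mul', hm.not_ge]
  · obtain ⟨m, rfl⟩ := Nat.exists_eq_add_of_le' hm
    exact (coeff_quadrupleFactorialSeries_add_two m).le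

lemma coeff_quadrupleFactorialSeries_sq_add_four_le (q : ℕ) :
    coeff (q + 4) (quadrupleFactorialSeries ^ 2) ≤
      12 * (q + 1) * quadrupleFactorial (q + 2) := by
  rw [quadrupleFactorialSeries, mul_pow, ← pow_mul, coeff_X_pow_mul, pow_two, coeff_mul]
  calc ∑ p ∈ antidiagonal q, coeff p.1 (PowerSeries.mk fun m ↦ quadrupleFactorial (m + 2)) *
        coeff p.2 (PowerSeries.mk fun m ↦ quadrupleFactorial (m + 2))
      ≤ ∑ _p ∈ antidiagonal q, 12 * quadrupleFactorial (q + 2) := by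
        refine Finset.sum_le_sum fun p hp ↦ ?_
        rw [coeff_mk, coeff_mk, ← mem_antidiagonal.1 hp]
        exact quadrupleFactorial_mul_le p.1 p.2
    _ = 12 * (q + 1) * quadrupleFactorial (q + 2) := by
        rw [Finset.sum_const, Finset.Nat.card_antidiagonal, smul_eq_mul]; ring

lemma coeff_quadrupleFactorialSeries_sq_of_lt {m : ℕ} (hm : m < 4) :
    coeff m (quadrupleFactorialSeries ^ 2) = 0 := by
  rw [quadrupleFactorialSeries, mul_pow, ← pow_mul, coeff_X_pow_mul', if_neg hm.not_ge]

lemma quadrupleFactorial_add_four (q : ℕ) : quadrupleFactorial (q + 4) =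
    4 * (2 * q + 7) * (2 * q + 5) * quadrupleFactorial (q + 2) := by
  rw [quadrupleFactorial_succ (q + 3), quadrupleFactorial_succ (q + 2)]
  ring

lemma eight_mul_coeff_quadrupleFactorialSeries_sq_le (m : ℕ) :
    8 * coeff m (quadrupleFactorialSeries ^ 2) ≤ coeff m quadrupleFactorialSeries := by
  rcases lt_or_ge m 4 with hm | hm
  · simp [coeff_quadrupleFactorialSeries_sq_of_lt hm]
  obtain ⟨q, rfl⟩ := Nat.exists_eq_add_of_le' hm
  rw [coeff_quadrupleFactorialSeries_add_two (q + 2), quadrupleFactorial_add_four]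
  calc 8 * coeff (q + 4) (quadrupleFactorialSeries ^ 2)
      ≤ 8 * (12 * (q + 1) * quadrupleFactorial (q + 2)) := by
        gcongr; exact coeff_quadrupleFactorialSeries_sq_add_four_le q
    _ = 96 * (q + 1) * quadrupleFactorial (q + 2) := by ring
    _ ≤ 4 * (2 * q + 7) * (2 * q + 5) * quadrupleFactorial (q + 2) :=
        Nat.mul_le_mul_right _ (by nlinarith)

lemma mul_coeff_quadrupleFactorialSeries_sq_le (m : ℕ) :
    m * coeff m (quadrupleFactorialSeries ^ 2) ≤ quadrupleFactorial m := by
  rcases lt_or_ge m 4 with hm | hm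
  · simp [coeff_quadrupleFactorialSeries_sq_of_lt hm]
  obtain ⟨q, rfl⟩ := Nat.exists_eq_add_of_le' hm
  calc (q + 4) * coeff (q + 4) (quadrupleFactorialSeries ^ 2)
      ≤ (q + 4) * (12 * (q + 1) * quadrupleFactorial (q + 2)) := by
        gcongr; exact coeff_quadrupleFactorialSeries_sq_add_four_le q
    _ = 12 * (q + 4) * (q + 1) * quadrupleFactorial (q + 2) := by ring
    _ ≤ 4 * (2 * q + 7) * (2 * q + 5) * quadrupleFactorial (q + 2) :=
        Nat.mul_le_mul_right _ (by nlinarith)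
    _ = quadrupleFactorial (q + 4) := (quadrupleFactorial_add_four q).symm

/-- The generating function of `centralBinom m` times the number of permutations of `Fin m` without
strong fixed points. The coefficient of `x ^ m` in its power with exponent `k + 1` accounts for the
pairs of paths that share `k` edges and differ in the `m` others. -/
noncomputable def strongFixedFreeSeries : ℕ⟦X⟧ :=
  PowerSeries.mk fun m ↦ (strongFixedFree m).card * m.centralBinom

/-- `strongFixedFreeSeries` without its constant term; its terms of degree less than two vanish. -/
noncomputable def strongFixedFreeTail : ℕ⟦X⟧ :=
  PowerSeries.X ^ 2 * PowerSeries.mk fun m ↦ coeff (m + 2) strongFixedFreeSeries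

lemma strongFixedFreeSeries_eq_one_add : strongFixedFreeSeries = 1 + strongFixedFreeTail := by
  ext m
  rw [map_add, coeff_one, strongFixedFreeTail]
  rcases m with _ | _ | m
  · simp [strongFixedFreeSeries, coeff_X_pow_mul', card_strongFixedFree_zero]
  · simp [strongFixedFreeSeries, coeff_X_pow_mul', card_strongFixedFree_one]
  · rw [coeff_X_pow_mul _ 2 m, coeff_mk]
    simp

lemma coeff_strongFixedFreeSeries_le (m : ℕ) :
    coeff m strongFixedFreeSeries ≤ quadrupleFactorial m := by
  rw [strongFixedFreeSeries, coeff_mk, quadrupleFactorial]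
  gcongr
  exact card_strongFixedFree_le_factorial m

lemma coeff_strongFixedFreeTail_le (m : ℕ) :
    coeff m strongFixedFreeTail ≤ coeff m quadrupleFactorialSeries := by
  rw [strongFixedFreeTail, quadrupleFactorialSeries, coeff_X_pow_mul', coeff_X_pow_mul']
  split_ifs
  · rw [coeff_mk, coeff_mk]
    exact coeff_strongFixedFreeSeries_le _
  · rfl

lemma coeff_strongFixedFreeTail_pow_of_lt {j m : ℕ} (h : m < 2 * j) :
    coeff m (strongFixedFreeTail ^ j) = 0 := by
  rw [strongFixedFreeTail, mul_pow, ← pow_mul, coeff_X_pow_mul', if_neg h.not_ge]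

lemma pow_mul_coeff_strongFixedFreeTail_pow_succ_le (j m : ℕ) :
    8 ^ j * coeff m (strongFixedFreeTail ^ (j + 1)) ≤ coeff m quadrupleFactorialSeries := by
  induction j generalizing m with
  | zero => simpa using coeff_strongFixedFreeTail_le m
  | succ j ih =>
    calc 8 ^ (j + 1) * coeff m (strongFixedFreeTail ^ (j + 1 + 1))
        = 8 * (8 ^ j * coeff m (strongFixedFreeTail ^ (j + 1) * strongFixedFreeTail)) := by
          rw [pow_succ strongFixedFreeTail, pow_succ' 8, mul_assoc]
      _ ≤ 8 * coeff m (quadrupleFactorialSeries ^ 2) := by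
          rw [pow_two]
          gcongr
          exact mul_coeff_mul_le_coeff_mul ih coeff_strongFixedFreeTail_le m
      _ ≤ coeff m quadrupleFactorialSeries := eight_mul_coeff_quadrupleFactorialSeries_sq_le m

lemma mul_coeff_strongFixedFreeTail_pow_add_two_le (j m : ℕ) :
    m * coeff m (strongFixedFreeTail ^ (j + 2)) ≤ quadrupleFactorial m := by
  calc m * coeff m (strongFixedFreeTail ^ (j + 2))
      ≤ m * (8 ^ j * coeff m (strongFixedFreeTail ^ (j + 1) * strongFixedFreeTail)) := by
        rw [pow_succ strongFixedFreeTail]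
        gcongr
        exact Nat.le_mul_of_pos_left _ (by positivity)
    _ ≤ m * coeff m (quadrupleFactorialSeries ^ 2) := by
        rw [pow_two]
        gcongr
        exact mul_coeff_mul_le_coeff_mul (pow_mul_coeff_strongFixedFreeTail_pow_succ_le j)
          coeff_strongFixedFreeTail_le m
    _ ≤ quadrupleFactorial m := mul_coeff_quadrupleFactorialSeries_sq_le m

lemma pow_mul_coeff_strongFixedFreeTail_pow_le (j m : ℕ) :
    8 ^ j * coeff m (strongFixedFreeTail ^ j) ≤ 8 * quadrupleFactorial m := by
  rcases j with _ | j
  · have := quadrupleFactorial_pos m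
    rw [pow_zero, pow_zero, coeff_one]
    split_ifs <;> omega
  · rw [pow_succ', mul_assoc]
    gcongr
    exact (pow_mul_coeff_strongFixedFreeTail_pow_succ_le j m).trans
      (coeff_quadrupleFactorialSeries_le m)

-- Inserting `z ^ (2 * j) ≤ z ^ m`, valid for the nonzero terms of the binomial expansion of
-- `(1 + strongFixedFreeTail) ^ K`, trades growth in `m` for a base close to `1`.
lemma coeff_strongFixedFreeSeries_pow_le (K m : ℕ) {z : ℝ} (hz : 1 ≤ z) :
    ((coeff m (strongFixedFreeSeries ^ K) : ℕ) : ℝ) ≤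
      8 * quadrupleFactorial m * z ^ m * (1 / (8 * z ^ 2) + 1) ^ K := by
  have term_le (j : ℕ) : ((coeff m (strongFixedFreeTail ^ j) : ℕ) : ℝ) ≤
      8 * quadrupleFactorial m * z ^ m * (1 / (8 * z ^ 2)) ^ j := by
    rcases lt_or_ge m (2 * j) with h | h
    · rw [coeff_strongFixedFreeTail_pow_of_lt h, Nat.cast_zero]
      positivity
    have scaled_le : (8 : ℝ) ^ j * coeff m (strongFixedFreeTail ^ j) ≤ 8 * quadrupleFactorial m :=
      mod_cast pow_mul_coeff_strongFixedFreeTail_pow_le j m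
    rw [one_div, inv_pow, ← div_eq_mul_inv, le_div_iff₀ (by positivity)]
    calc ((coeff m (strongFixedFreeTail ^ j) : ℕ) : ℝ) * (8 * z ^ 2) ^ j
        = 8 ^ j * coeff m (strongFixedFreeTail ^ j) * z ^ (2 * j) := by rw [mul_pow]; ring
      _ ≤ 8 * quadrupleFactorial m * z ^ m := by gcongr
  rw [strongFixedFreeSeries_eq_one_add, coeff_one_add_pow, add_pow, Finset.mul_sum]
  push_cast
  refine Finset.sum_le_sum fun j _ ↦ ?_
  calc (K.choose j : ℝ) * coeff m (strongFixedFreeTail ^ j)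
      ≤ K.choose j * (8 * quadrupleFactorial m * z ^ m * (1 / (8 * z ^ 2)) ^ j) := by
        gcongr; exact term_le j
    _ = _ := by rw [one_pow]; ring

lemma tendsto_coeff_strongFixedFreeTail_pow_div (j : ℕ) :
    Tendsto (fun m : ℕ ↦ ((coeff m (strongFixedFreeTail ^ j) : ℕ) : ℝ) / quadrupleFactorial m)
      atTop (nhds (if j = 1 then 1 else 0)) := by
  rcases j with _ | _ | j
  · rw [if_neg zero_ne_one]
    refine tendsto_const_nhds.congr' ?_
    filter_upwards [eventually_gt_atTop 0] with m hm
    rw [pow_zero, coeff_one, if_neg hm.ne', Nat.cast_zero, zero_div]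
  · rw [zero_add, if_pos rfl]
    refine tendsto_card_strongFixedFree_div_factorial.congr' ?_
    filter_upwards [eventually_ge_atTop 2] with m hm
    obtain ⟨m, rfl⟩ := Nat.exists_eq_add_of_le' hm
    rw [pow_one, strongFixedFreeTail, coeff_X_pow_mul, coeff_mk, strongFixedFreeSeries, coeff_mk,
      quadrupleFactorial]
    push_cast
    rw [mul_div_mul_right _ _ (Nat.cast_ne_zero.2 (Nat.centralBinom_ne_zero _))]
  · rw [if_neg (by omega)]
    refine squeeze_zero' (.of_forall fun _ ↦ div_nonneg (Nat.cast_nonneg _) (Nat.cast_nonneg _)) ?_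
      tendsto_one_div_atTop_nhds_zero_nat
    filter_upwards [eventually_gt_atTop 0] with m hm
    have pos : (0 : ℝ) < quadrupleFactorial m := mod_cast quadrupleFactorial_pos m
    rw [div_le_div_iff₀ pos (by positivity), one_mul, mul_comm]
    exact_mod_cast mul_coeff_strongFixedFreeTail_pow_add_two_le j m

lemma tendsto_coeff_strongFixedFreeSeries_pow_div (K : ℕ) :
    Tendsto (fun m : ℕ ↦ ((coeff m (strongFixedFreeSeries ^ K) : ℕ) : ℝ) / quadrupleFactorial m)
      atTop (nhds K) := by
  have termwise : Tendsto (fun m : ℕ ↦ ∑ j ∈ Finset.range (K + 1),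
      (K.choose j : ℝ) * (coeff m (strongFixedFreeTail ^ j) / quadrupleFactorial m)) atTop
      (nhds (∑ j ∈ Finset.range (K + 1), (K.choose j : ℝ) * if j = 1 then 1 else 0)) :=
    tendsto_finsetSum _ fun j _ ↦ (tendsto_coeff_strongFixedFreeTail_pow_div j).const_mul _
  have limit_eq : ∑ j ∈ Finset.range (K + 1), (K.choose j : ℝ) * (if j = 1 then 1 else 0) = K := by
    rcases K.eq_zero_or_pos with rfl | hK <;> simp [*]
  rw [limit_eq] at termwise
  refine termwise.congr fun m ↦ ?_
  rw [strongFixedFreeSeries_eq_one_add, coeff_one_add_pow]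
  push_cast
  simp only [Finset.sum_div, mul_div_assoc]

end GeneratingFunction

section MomentTerms

/-- The factor `(k + m)! a m / (k + 2 m)!` of `momentTerm k m`, where `a` denotes the quadruple
factorials. -/
noncomputable def momentRatio (k m : ℕ) : ℝ :=
  (k + m).factorial * quadrupleFactorial m / (k + 2 * m).factorial

/-- The contribution to the second moment in dimension `k + m` of the pairs of paths sharing exactly
`k` edges. -/
noncomputable def momentTerm (k m : ℕ) : ℝ :=
  (k + m).factorial * (PowerSeries.coeff m (strongFixedFreeSeries ^ (k + 1)) : ℕ) /
    (k + 2 * m).factorial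

lemma momentRatio_nonneg (k m : ℕ) : 0 ≤ momentRatio k m := by
  unfold momentRatio; positivity

lemma momentTerm_nonneg (k m : ℕ) : 0 ≤ momentTerm k m :=
  div_nonneg (mul_nonneg (Nat.cast_nonneg _) (Nat.cast_nonneg _)) (Nat.cast_nonneg _)

lemma momentTerm_eq_mul_momentRatio (k m : ℕ) :
    momentTerm k m =
      (PowerSeries.coeff m (strongFixedFreeSeries ^ (k + 1)) : ℕ) / quadrupleFactorial m *
        momentRatio k m := by
  have : (quadrupleFactorial m : ℝ) ≠ 0 := mod_cast (quadrupleFactorial_pos m).ne'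
  unfold momentTerm momentRatio
  field_simp

lemma momentTerm_zero_right (k : ℕ) : momentTerm k 0 = 1 := by
  have : (k.factorial : ℝ) ≠ 0 := by positivity
  simp [momentTerm, strongFixedFreeSeries, card_strongFixedFree_zero, this]

lemma momentRatio_zero_left (m : ℕ) : momentRatio 0 m = 1 := by
  rw [momentRatio, zero_add, zero_add, ← quadrupleFactorial_mul_factorial]
  push_cast
  rw [mul_comm, div_self]
  exact mod_cast (Nat.mul_pos (quadrupleFactorial_pos m) m.factorial_pos).ne'

lemma momentRatio_succ_left (k m : ℕ) :
    momentRatio (k + 1) m = momentRatio k m * ((k + m + 1) / (k + 2 * m + 1)) := by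
  unfold momentRatio
  rw [show k + 1 + m = k + m + 1 by ring, show k + 1 + 2 * m = k + 2 * m + 1 by ring,
    Nat.factorial_succ, Nat.factorial_succ]
  push_cast
  field_simp

lemma momentRatio_le_pow_left {k m : ℕ} (h : k ≤ 3 * m) : momentRatio k m ≤ (4 / 5) ^ k := by
  induction k with
  | zero => simp [momentRatio_zero_left]
  | succ k ih =>
    rw [momentRatio_succ_left, pow_succ]
    have : (k : ℝ) + 1 ≤ 3 * m := by exact_mod_cast h
    refine mul_le_mul (ih (by omega)) ?_ (by positivity) (by positivity)
    rw [div_le_div_iff₀ (by positivity) (by norm_num)]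
    linarith

lemma quadrupleFactorial_le_pow (m : ℕ) : quadrupleFactorial m ≤ (2 * m) ^ m := by
  rw [quadrupleFactorial, Nat.centralBinom_eq_two_mul_choose,
    ← Nat.descFactorial_eq_factorial_mul_choose]
  exact Nat.descFactorial_le_pow _ _

lemma momentRatio_le_pow_right {k m : ℕ} (hm : 0 < m) :
    momentRatio k m ≤ (2 * m / (k + m)) ^ m := by
  have factorial_mul_pow_le : (k + m).factorial * (k + m) ^ m ≤ (k + 2 * m).factorial := by
    calc (k + m).factorial * (k + m) ^ m ≤ (k + m).factorial * (k + m + 1) ^ m :=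
          Nat.mul_le_mul_left _ (Nat.pow_le_pow_left (by omega) _)
      _ ≤ (k + m + m).factorial := Nat.factorial_mul_pow_le_factorial
      _ = (k + 2 * m).factorial := by congr 1; ring
  rw [momentRatio, div_pow, div_le_div_iff₀ (by positivity) (by positivity)]
  calc ((k + m).factorial * quadrupleFactorial m * (k + m) ^ m : ℝ)
      = quadrupleFactorial m * ((k + m).factorial * (k + m) ^ m) := by ring
    _ ≤ (2 * m) ^ m * (k + 2 * m).factorial := by
        gcongr
        · exact mod_cast quadrupleFactorial_le_pow m
        · exact mod_cast factorial_mul_pow_le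

lemma tendsto_momentRatio (k : ℕ) :
    Tendsto (fun m ↦ momentRatio k m) atTop (nhds ((1 / 2) ^ k)) := by
  induction k with
  | zero => simp [momentRatio_zero_left]
  | succ k ih =>
    simp only [momentRatio_succ_left, pow_succ]
    refine ih.mul ?_
    have inv_tendsto : Tendsto (fun m : ℕ ↦ ((k : ℝ) + 1) * (1 / m)) atTop (nhds 0) := by
      simpa using (tendsto_one_div_atTop_nhds_zero_nat (𝕜 := ℝ)).const_mul ((k : ℝ) + 1)
    have quotient_tendsto := (inv_tendsto.add_const 1).div (inv_tendsto.add_const 2) (by norm_num)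
    rw [zero_add, zero_add] at quotient_tendsto
    refine quotient_tendsto.congr' ?_
    filter_upwards [eventually_gt_atTop 0] with m hm
    simp only [Pi.div_apply]
    field_simp
    ring

lemma tendsto_momentTerm_right (k : ℕ) :
    Tendsto (fun m ↦ momentTerm k m) atTop (nhds ((k + 1) * (1 / 2) ^ k)) := by
  simp only [momentTerm_eq_mul_momentRatio]
  exact_mod_cast (tendsto_coeff_strongFixedFreeSeries_pow_div (k + 1)).mul (tendsto_momentRatio k)

lemma momentTerm_le (k m : ℕ) {z : ℝ} (hz : 1 ≤ z) :
    momentTerm k m ≤ 8 * momentRatio k m * z ^ m * (1 / (8 * z ^ 2) + 1) ^ (k + 1) := by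
  have pos : (0 : ℝ) < quadrupleFactorial m := mod_cast quadrupleFactorial_pos m
  rw [momentTerm_eq_mul_momentRatio]
  calc _ ≤ 8 * quadrupleFactorial m * z ^ m * (1 / (8 * z ^ 2) + 1) ^ (k + 1) /
        quadrupleFactorial m * momentRatio k m := by
        gcongr
        · exact momentRatio_nonneg k m
        · exact coeff_strongFixedFreeSeries_pow_le (k + 1) m hz
    _ = _ := by field_simp

lemma momentTerm_le_pow_left {k m : ℕ} (h : k ≤ 3 * m) :
    momentTerm k m ≤ 9 * (9 / 10) ^ k := by
  calc momentTerm k m ≤ 8 * momentRatio k m * 1 ^ m * (1 / (8 * 1 ^ 2) + 1) ^ (k + 1) :=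
        momentTerm_le k m le_rfl
    _ ≤ 8 * (4 / 5) ^ k * 1 ^ m * (1 / (8 * 1 ^ 2) + 1) ^ (k + 1) := by
        gcongr; exact momentRatio_le_pow_left h
    _ = 9 * (4 / 5 * (9 / 8)) ^ k := by rw [mul_pow, pow_succ (_ + 1), one_pow]; ring
    _ = 9 * (9 / 10) ^ k := by norm_num

-- The choice `z ^ 2 = (k + m) / (4 * m)` keeps the last factor in `momentTerm_le` below
-- `exp (m / 2)`.
lemma momentTerm_le_exp_mul_pow {k m : ℕ} (hm : 0 < m) {w : ℝ} (hw₀ : 0 < w) (hw₁ : w ≤ 1)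
    (hw : w ^ 2 = 4 * m / (k + m)) :
    momentTerm k m ≤ 8 * (Real.exp (1 / 2) / 2 * w) ^ m := by
  have hm₁ : (1 : ℝ) ≤ m := mod_cast hm
  have growth_le : (1 / (8 * (1 / w) ^ 2) + 1) ^ (k + 1) ≤ Real.exp (1 / 2) ^ m := by
    calc (1 / (8 * (1 / w) ^ 2) + 1) ^ (k + 1) = (w ^ 2 / 8 + 1) ^ (k + 1) := by
          congr 2; field_simp
      _ ≤ Real.exp (w ^ 2 / 8) ^ (k + 1) := by gcongr; exact Real.add_one_le_exp _
      _ = Real.exp (((k + 1 : ℕ) : ℝ) * (w ^ 2 / 8)) := by rw [Real.exp_nat_mul]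
      _ ≤ Real.exp (m * (1 / 2)) := by
          rw [Real.exp_le_exp, hw]
          push_cast
          rw [div_div, mul_div_assoc', div_le_iff₀ (by positivity)]
          nlinarith
      _ = Real.exp (1 / 2) ^ m := by rw [Real.exp_nat_mul]
  have ratio_le : momentRatio k m ≤ (w ^ 2 / 2) ^ m := by
    rw [hw]
    refine (momentRatio_le_pow_right hm).trans_eq ?_
    congr 1
    ring
  calc momentTerm k m
      ≤ 8 * momentRatio k m * (1 / w) ^ m * (1 / (8 * (1 / w) ^ 2) + 1) ^ (k + 1) :=
        momentTerm_le k m ((one_le_div₀ hw₀).2 hw₁)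
    _ ≤ 8 * (w ^ 2 / 2) ^ m * (1 / w) ^ m * Real.exp (1 / 2) ^ m := by gcongr
    _ = 8 * (w ^ 2 / 2 * (1 / w) * Real.exp (1 / 2)) ^ m := by rw [mul_pow, mul_pow]; ring
    _ = 8 * (Real.exp (1 / 2) / 2 * w) ^ m := by congr 2; field_simp

lemma exp_half_div_two_le : Real.exp (1 / 2) / 2 ≤ 9 / 10 := by
  have sq_lt : Real.exp (1 / 2) ^ 2 < 3 := by
    rw [← Real.exp_nat_mul]
    norm_num [Real.exp_one_lt_three]
  nlinarith [Real.exp_pos (1 / 2)]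

lemma momentTerm_le_sqrt_pow {k m : ℕ} (h : 3 * m ≤ k) :
    momentTerm k m ≤ 8 * (9 / 10 * √(4 * m / (k + m))) ^ m := by
  rcases m.eq_zero_or_pos with rfl | hm
  · norm_num [momentTerm_zero_right]
  have hkm : (3 * m : ℝ) ≤ k := mod_cast h
  have le_one : √(4 * m / (k + m)) ≤ (1 : ℝ) := by
    rw [Real.sqrt_le_one, div_le_one (by positivity)]
    linarith
  refine (momentTerm_le_exp_mul_pow hm (by positivity) le_one
    (Real.sq_sqrt (by positivity))).trans ?_
  gcongr 8 * (?_ * _) ^ m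
  exact exp_half_div_two_le

lemma momentTerm_le_pow_right {k m : ℕ} (h : 3 * m ≤ k) :
    momentTerm k m ≤ 8 * (9 / 10) ^ m := by
  have hkm : (3 * m : ℝ) ≤ k := mod_cast h
  refine (momentTerm_le_sqrt_pow h).trans ?_
  gcongr
  refine mul_le_of_le_one_right (by norm_num) (Real.sqrt_le_one.2 (div_le_one_of_le₀ ?_ ?_))
  · linarith
  · positivity

lemma tendsto_momentTerm_left (m : ℕ) :
    Tendsto (fun k ↦ momentTerm k m) atTop (nhds (if m = 0 then 1 else 0)) := by
  split_ifs with hm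
  · simp [hm, momentTerm_zero_right]
  have quotient_tendsto : Tendsto (fun k : ℕ ↦ 4 * (m : ℝ) / (k + m)) atTop (nhds 0) :=
    (tendsto_atTop_add_const_right _ _ tendsto_natCast_atTop_atTop).const_div_atTop _
  have bound_tendsto := ((quotient_tendsto.sqrt.const_mul (9 / 10)).pow m).const_mul 8
  rw [Real.sqrt_zero, mul_zero, zero_pow hm, mul_zero] at bound_tendsto
  refine squeeze_zero' (.of_forall fun k ↦ momentTerm_nonneg k m) ?_ bound_tendsto
  filter_upwards [eventually_ge_atTop (3 * m)] with k hk using momentTerm_le_sqrt_pow hk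

lemma hasSum_add_one_mul_half_pow : HasSum (fun k : ℕ ↦ ((k : ℝ) + 1) * (1 / 2) ^ k) 4 := by
  have sum_eq : (1 / 2 : ℝ) / (1 - 1 / 2) ^ 2 + (1 - 1 / 2)⁻¹ = 4 := by norm_num
  simpa only [add_mul, one_mul, sum_eq] using
    (hasSum_coe_mul_geometric_of_norm_lt_one (r := (1 / 2 : ℝ)) (by norm_num)).add
      (hasSum_geometric_of_norm_lt_one (ξ := (1 / 2 : ℝ)) (by norm_num))

end MomentTerms

section Tannery

variable {E : Type*} [NormedAddCommGroup E] [CompleteSpace E] {f : ℕ → ℕ → E} {a b : ℕ → E}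
  {α β : ℕ → ℝ}

lemma tendsto_sum_antidiagonal_of_dominated (hα : Summable α)
    (ha : ∀ k, Tendsto (f k) atTop (nhds (a k))) (hfα : ∀ k m, ‖f k m‖ ≤ α k) :
    Tendsto (fun n ↦ ∑ p ∈ antidiagonal n, f p.1 p.2) atTop (nhds (∑' k, a k)) := by
  have sum_eq_tsum (n : ℕ) : ∑ p ∈ antidiagonal n, f p.1 p.2 =
      ∑' k, if k ≤ n then f k (n - k) else 0 := by
    rw [Finset.Nat.sum_antidiagonal_eq_sum_range_succ f, tsum_eq_sum (s := Finset.range (n + 1))]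
    · exact Finset.sum_congr rfl fun k hk ↦ (if_pos (Finset.mem_range_succ_iff.1 hk)).symm
    · exact fun k hk ↦ if_neg (mt Finset.mem_range_succ_iff.2 hk)
  simp only [sum_eq_tsum]
  refine tendsto_tsum_of_dominated_convergence hα (fun k ↦ ?_) (.of_forall fun n k ↦ ?_)
  · refine ((ha k).comp (tendsto_sub_atTop_nat k)).congr' ?_
    filter_upwards [eventually_ge_atTop k] with n hn using (if_pos hn).symm
  · split_ifs
    · exact hfα k (n - k)
    · exact norm_zero.trans_le ((norm_nonneg _).trans (hfα k 0))

-- Tannery's theorem, applied separately to the indices with `k ≤ c * m` and to the others.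
lemma tendsto_sum_antidiagonal_of_dominated_of_dominated {c : ℕ} (hc : 0 < c) (hα : Summable α)
    (hβ : Summable β) (ha : ∀ k, Tendsto (fun m ↦ f k m) atTop (nhds (a k)))
    (hb : ∀ m, Tendsto (fun k ↦ f k m) atTop (nhds (b m)))
    (hfα : ∀ k m, k ≤ c * m → ‖f k m‖ ≤ α k) (hfβ : ∀ k m, c * m ≤ k → ‖f k m‖ ≤ β m) :
    Tendsto (fun n ↦ ∑ p ∈ antidiagonal n, f p.1 p.2) atTop
      (nhds (∑' k, a k + ∑' m, b m)) := by
  have split (n : ℕ) : ∑ p ∈ antidiagonal n, f p.1 p.2 =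
      ∑ p ∈ antidiagonal n, (if p.1 ≤ c * p.2 then f p.1 p.2 else 0) +
      ∑ p ∈ antidiagonal n, (if p.2 ≤ c * p.1 then 0 else f p.2 p.1) := by
    rw [← Finset.Nat.sum_antidiagonal_swap (f := fun p ↦ if p.2 ≤ c * p.1 then 0 else f p.2 p.1),
      ← Finset.sum_add_distrib]
    refine Finset.sum_congr rfl fun p _ ↦ ?_
    simp only [Prod.fst_swap, Prod.snd_swap]
    split_ifs <;> simp
  simp only [split]
  refine (tendsto_sum_antidiagonal_of_dominated (f := fun k m ↦ if k ≤ c * m then f k m else 0)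
    hα (fun k ↦ ?_) fun k m ↦ ?_).add (tendsto_sum_antidiagonal_of_dominated
    (f := fun m k ↦ if k ≤ c * m then 0 else f k m) hβ (fun m ↦ ?_) fun m k ↦ ?_)
  · refine (ha k).congr' ?_
    filter_upwards [eventually_ge_atTop k] with m hm
    rw [if_pos (hm.trans (Nat.le_mul_of_pos_left m hc))]
  · split_ifs with h
    · exact hfα k m h
    · exact norm_zero.trans_le ((norm_nonneg _).trans (hfα k k (Nat.le_mul_of_pos_left k hc)))
  · refine (hb m).congr' ?_
    filter_upwards [eventually_gt_atTop (c * m)] with k hk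
    rw [if_neg hk.not_ge]
  · split_ifs with h
    · exact norm_zero.trans_le ((norm_nonneg _).trans (hfβ (c * m) m le_rfl))
    · exact hfβ k m (not_le.1 h).le

end Tannery

lemma tendsto_sum_antidiagonal_momentTerm :
    Tendsto (fun n ↦ ∑ p ∈ antidiagonal n, momentTerm p.1 p.2) atTop (nhds 5) := by
  have geometric_summable (C : ℝ) : Summable fun k : ℕ ↦ C * (9 / 10) ^ k :=
    (summable_geometric_of_lt_one (by norm_num) (by norm_num)).mul_left C
  have norm_eq (k m : ℕ) : ‖momentTerm k m‖ = momentTerm k m :=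
    Real.norm_of_nonneg (momentTerm_nonneg k m)
  have limit_eq :
      ∑' k : ℕ, ((k : ℝ) + 1) * (1 / 2) ^ k + ∑' m : ℕ, (if m = 0 then 1 else 0) = 5 := by
    rw [hasSum_add_one_mul_half_pow.tsum_eq, tsum_ite_eq]
    norm_num
  rw [← limit_eq]
  exact tendsto_sum_antidiagonal_of_dominated_of_dominated three_pos (geometric_summable 9)
    (geometric_summable 8) tendsto_momentTerm_right tendsto_momentTerm_left
    (fun k m h ↦ (norm_eq k m).trans_le (momentTerm_le_pow_left h))
    (fun k m h ↦ (norm_eq k m).trans_le (momentTerm_le_pow_right h))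

section PathIntegrals

lemma sum_antidiagonal_antidiagonal_comm {M : Type*} [AddCommMonoid M] (n : ℕ)
    (f : ℕ → ℕ → ℕ → M) :
    ∑ p ∈ antidiagonal n, ∑ q ∈ antidiagonal p.2, f p.1 q.1 q.2 =
      ∑ p ∈ antidiagonal n, ∑ q ∈ antidiagonal p.2, f q.1 p.1 q.2 := by
  rw [Finset.sum_sigma', Finset.sum_sigma']
  refine Finset.sum_nbij' (fun r ↦ ⟨(r.2.1, r.1.1 + r.2.2), (r.1.1, r.2.2)⟩)
    (fun r ↦ ⟨(r.2.1, r.1.1 + r.2.2), (r.1.1, r.2.2)⟩) ?_ ?_ ?_ ?_ ?_ <;>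
  grind [mem_antidiagonal]

open scoped ENNReal

variable {Ω : Type*} [MeasurableSpace Ω]

/-- The law of two random variables with law `μ` that are equal (`true`) or independent
(`false`). -/
noncomputable def pairLaw (μ : Measure Ω) : Bool → Measure (Ω × Ω)
  | true => μ.map fun x ↦ (x, x)
  | false => μ.prod μ

instance (μ : Measure Ω) [IsProbabilityMeasure μ] (c : Bool) :
    IsProbabilityMeasure (pairLaw μ c) := by
  cases c
  · exact inferInstanceAs (IsProbabilityMeasure (μ.prod μ))
  · exact Measure.isProbabilityMeasure_map (by fun_prop)

lemma map_infinitePi_prodMk_eq_infinitePi_pairLaw {ι J : Type*} [DecidableEq ι] (μ : Measure Ω)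
    [IsProbabilityMeasure μ] {a b : J → ι} (ha : Function.Injective a) (hb : Function.Injective b)
    (hab : ∀ i j, a i = b j → i = j) :
    (Measure.infinitePi fun _ : ι ↦ μ).map (fun ω j ↦ (ω (a j), ω (b j))) =
      Measure.infinitePi fun j ↦ pairLaw μ (decide (a j = b j)) := by
  have inclusion_injective :
      Function.Injective fun p : Σ j, {i // i = a j ∨ i = b j} ↦ (p.2 : ι) := by
    rintro ⟨j, i, hi⟩ ⟨j', i', hi'⟩ rfl
    obtain rfl : j = j' := by
      rcases hi with rfl | rfl <;> rcases hi' with h | h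
      exacts [ha h, hab _ _ h, (hab _ _ h.symm).symm, hb h]
    rfl
  have block_law (j : J) :
      (Measure.infinitePi fun _ : {i // i = a j ∨ i = b j} ↦ μ).map
        (fun g ↦ (g ⟨a j, .inl rfl⟩, g ⟨b j, .inr rfl⟩)) = pairLaw μ (decide (a j = b j)) := by
    by_cases h : a j = b j
    · simp only [h, decide_true, pairLaw]
      conv_rhs => rw [← Measure.infinitePi_map_eval (fun _ : {i // i = a j ∨ i = b j} ↦ μ)
        ⟨b j, .inr rfl⟩, Measure.map_map (by fun_prop) (by fun_prop)]
      rfl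
    · rw [decide_eq_false h, pairLaw, Measure.infinitePi_map_eval_prod (by simpa using h)]
  simp only [← block_law]
  rw [← Measure.infinitePi_map_pi (fun j ↦ Measure.infinitePi fun _ ↦ μ) (by fun_prop),
    ← Measure.infinitePi_map_piCurry (fun j (_ : {i // i = a j ∨ i = b j}) ↦ μ),
    ← Measure.map_infinitePi_infinitePi_of_inj (P := fun _ ↦ μ) inclusion_injective,
    Measure.map_map (by fun_prop) (by fun_prop), Measure.map_map (by fun_prop) (by fun_prop)]
  rfl

variable (μ : Measure Ω) (K : Ω → Ω → ℝ≥0∞)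

/-- The iterated integral kernels of `K`: `iterKernel μ K l s u` integrates the product of `K` along
all sequences from `s` to `u` with `l` intermediate points. -/
noncomputable def iterKernel : ℕ → Ω → Ω → ℝ≥0∞
  | 0, s, u => K s u
  | l + 1, s, u => ∫⁻ x, K s x * iterKernel l x u ∂μ

/-- The product of `K` along the sequence that starts at `s`, runs through `f` and ends at `x`. -/
noncomputable def kernelProd (x : Ω) : {n : ℕ} → Ω → (Fin n → Ω) → ℝ≥0∞
  | 0, s, _ => K s x
  | _ + 1, s, f => K s (f 0) * kernelProd x (f 0) (Fin.tail f)

/-- The integral of the product of `K` along two sequences, from `s` to `x` and from `t` to `x`,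
which share their intermediate points at the positions marked `true` in the pattern. -/
noncomputable def pairIntegral (x : Ω) : List Bool → Ω → Ω → ℝ≥0∞
  | [], s, t => K s x * K t x
  | c :: b, s, t => ∫⁻ p, K s p.1 * K t p.2 * pairIntegral x b p.1 p.2 ∂(pairLaw μ c)

variable {μ K} (hK : Measurable (Function.uncurry K))
include hK

lemma measurable_iterKernel [SFinite μ] (l : ℕ) :
    Measurable (Function.uncurry (iterKernel μ K l)) := by
  induction l with
  | zero => exact hK
  | succ l ih =>
    refine Measurable.lintegral_prod_right'
      (f := fun q : (Ω × Ω) × Ω ↦ K q.1.1 q.2 * iterKernel μ K l q.2 q.1.2) ?_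
    exact (hK.comp (by fun_prop : Measurable fun q : (Ω × Ω) × Ω ↦ (q.1.1, q.2))).mul
      (ih.comp (by fun_prop : Measurable fun q : (Ω × Ω) × Ω ↦ (q.2, q.1.2)))

lemma lintegral_iterKernel_mul_iterKernel [SFinite μ] (l m : ℕ) (s x : Ω) :
    ∫⁻ u, iterKernel μ K l s u * iterKernel μ K m u x ∂μ = iterKernel μ K (l + m + 1) s x := by
  induction l generalizing s with
  | zero => rw [zero_add]; rfl
  | succ l ih =>
    have measurable_left (k : ℕ) (y : Ω) : Measurable (iterKernel μ K k y) :=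
      (measurable_iterKernel hK k).of_uncurry_left
    have measurable_right (k : ℕ) (y : Ω) : Measurable fun u ↦ iterKernel μ K k u y :=
      (measurable_iterKernel hK k).of_uncurry_right
    calc ∫⁻ u, (∫⁻ y, K s y * iterKernel μ K l y u ∂μ) * iterKernel μ K m u x ∂μ
        = ∫⁻ u, ∫⁻ y, K s y * iterKernel μ K l y u * iterKernel μ K m u x ∂μ ∂μ := by
          refine lintegral_congr fun u ↦ (lintegral_mul_const _ ?_).symm
          exact hK.of_uncurry_left.mul (measurable_right l u)
      _ = ∫⁻ y, ∫⁻ u, K s y * iterKernel μ K l y u * iterKernel μ K m u x ∂μ ∂μ := by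
          refine lintegral_lintegral_swap (Measurable.aemeasurable ?_)
          exact ((hK.of_uncurry_left.comp measurable_snd).mul
            ((measurable_iterKernel hK l).comp measurable_swap)).mul
            ((measurable_right m x).comp measurable_fst)
      _ = ∫⁻ y, K s y * ∫⁻ u, iterKernel μ K l y u * iterKernel μ K m u x ∂μ ∂μ := by
          refine lintegral_congr fun y ↦ ?_
          simp only [mul_assoc]
          exact lintegral_const_mul _ ((measurable_left l y).mul (measurable_right m x))
      _ = iterKernel μ K (l + 1 + m + 1) s x := by
          simp only [ih]
          rw [show l + 1 + m + 1 = l + m + 1 + 1 by ring, iterKernel]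

lemma lintegral_prod_mul_iterKernel [SFinite μ] (l : ℕ) (s t u : Ω) :
    ∫⁻ p, K s p.1 * K t p.2 * (iterKernel μ K l p.1 u * iterKernel μ K l p.2 u) ∂(μ.prod μ) =
      iterKernel μ K (l + 1) s u * iterKernel μ K (l + 1) t u := by
  have measurable_step (r : Ω) : Measurable fun x ↦ K r x * iterKernel μ K l x u :=
    hK.of_uncurry_left.mul (measurable_iterKernel hK l).of_uncurry_right
  rw [iterKernel, iterKernel,
    ← lintegral_prod_mul (measurable_step s).aemeasurable (measurable_step t).aemeasurable]
  exact lintegral_congr fun p ↦ mul_mul_mul_comm _ _ _ _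

lemma pairIntegral_replicate_false [SFinite μ] (x : Ω) (l : ℕ) (s t : Ω) :
    pairIntegral μ K x (List.replicate l false) s t =
      iterKernel μ K l s x * iterKernel μ K l t x := by
  induction l generalizing s t with
  | zero => rfl
  | succ l ih =>
    simp only [List.replicate_succ, pairIntegral, ih]
    exact lintegral_prod_mul_iterKernel hK l s t x

lemma measurable_pairIntegral [SFinite μ] (x : Ω) (b : List Bool) :
    Measurable (Function.uncurry (pairIntegral μ K x b)) := by
  have : ∀ c, SFinite (pairLaw μ c)
  | true => inferInstanceAs (SFinite (μ.map _))
  | false => inferInstanceAs (SFinite (μ.prod μ))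
  induction b with
  | nil =>
    exact (hK.of_uncurry_right.comp measurable_fst).mul (hK.of_uncurry_right.comp measurable_snd)
  | cons c b ih =>
    refine Measurable.lintegral_prod_right' (f := fun q : (Ω × Ω) × (Ω × Ω) ↦
      K q.1.1 q.2.1 * K q.1.2 q.2.2 * pairIntegral μ K x b q.2.1 q.2.2) ?_
    exact ((hK.comp (by fun_prop : Measurable fun q : (Ω × Ω) × (Ω × Ω) ↦ (q.1.1, q.2.1))).mul
      (hK.comp (by fun_prop : Measurable fun q : (Ω × Ω) × (Ω × Ω) ↦ (q.1.2, q.2.2)))).mul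
      (ih.comp measurable_snd)

lemma pairIntegral_replicate_false_append_true [SFinite μ] (x : Ω) (l : ℕ) (b : List Bool)
    (s t : Ω) :
    pairIntegral μ K x (List.replicate l false ++ true :: b) s t =
      ∫⁻ u, iterKernel μ K l s u * iterKernel μ K l t u * pairIntegral μ K x b u u ∂μ := by
  have measurable_diag : Measurable fun u ↦ pairIntegral μ K x b u u :=
    (measurable_pairIntegral hK x b).comp (by fun_prop : Measurable fun u : Ω ↦ (u, u))
  have measurable_prod (s t : Ω) : Measurable fun p : Ω × Ω ↦ K s p.1 * K t p.2 :=
    (hK.of_uncurry_left.comp measurable_fst).mul (hK.of_uncurry_left.comp measurable_snd)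
  induction l generalizing s t with
  | zero =>
    exact lintegral_map ((measurable_prod s t).mul (measurable_pairIntegral hK x b)) (by fun_prop)
  | succ l ih =>
    have measurable_pair : Measurable (Function.uncurry fun (p : Ω × Ω) u ↦
        iterKernel μ K l p.1 u * iterKernel μ K l p.2 u) :=
      ((measurable_iterKernel hK l).comp
        (by fun_prop : Measurable fun q : (Ω × Ω) × Ω ↦ (q.1.1, q.2))).mul
      ((measurable_iterKernel hK l).comp
        (by fun_prop : Measurable fun q : (Ω × Ω) × Ω ↦ (q.1.2, q.2)))
    calc ∫⁻ p, K s p.1 * K t p.2 *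
          pairIntegral μ K x (List.replicate l false ++ true :: b) p.1 p.2 ∂(μ.prod μ)
        = ∫⁻ p, ∫⁻ u, K s p.1 * K t p.2 * (iterKernel μ K l p.1 u * iterKernel μ K l p.2 u *
            pairIntegral μ K x b u u) ∂μ ∂(μ.prod μ) := by
          refine lintegral_congr fun p ↦ ?_
          rw [ih p.1 p.2, lintegral_const_mul]
          exact measurable_pair.of_uncurry_left.mul measurable_diag
      _ = ∫⁻ u, ∫⁻ p, K s p.1 * K t p.2 * (iterKernel μ K l p.1 u * iterKernel μ K l p.2 u *
            pairIntegral μ K x b u u) ∂(μ.prod μ) ∂μ := by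
          refine lintegral_lintegral_swap (Measurable.aemeasurable ?_)
          exact ((measurable_prod s t).comp measurable_fst).mul
            (measurable_pair.mul (measurable_diag.comp measurable_snd))
      _ = ∫⁻ u, iterKernel μ K (l + 1) s u * iterKernel μ K (l + 1) t u *
            pairIntegral μ K x b u u ∂μ := by
          refine lintegral_congr fun u ↦ ?_
          rw [← lintegral_prod_mul_iterKernel hK]
          refine (lintegral_congr fun p ↦ (mul_assoc _ _ _).symm).trans (lintegral_mul_const _ ?_)
          exact (measurable_prod s t).mul measurable_pair.of_uncurry_right

lemma measurable_kernelProd (x : Ω) (n : ℕ) :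
    Measurable fun q : Ω × (Fin n → Ω) ↦ kernelProd K x q.1 q.2 := by
  induction n with
  | zero => exact hK.of_uncurry_right.comp measurable_fst
  | succ n ih =>
    have measurable_tail : Measurable fun q : Ω × (Fin (n + 1) → Ω) ↦ (q.2 0, Fin.tail q.2) := by
      unfold Fin.tail
      fun_prop
    exact (hK.comp (by fun_prop : Measurable fun q : Ω × (Fin (n + 1) → Ω) ↦ (q.1, q.2 0))).mul
      (ih.comp measurable_tail)

lemma measurable_kernelProd_mul_kernelProd (x : Ω) {n : ℕ} (s t : Ω) :
    Measurable fun f : Fin n → Ω × Ω ↦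
      kernelProd K x s (fun j ↦ (f j).1) * kernelProd K x t (fun j ↦ (f j).2) :=
  ((measurable_kernelProd hK x n).comp
    (by fun_prop : Measurable fun f : Fin n → Ω × Ω ↦ (s, fun j ↦ (f j).1))).mul
  ((measurable_kernelProd hK x n).comp
    (by fun_prop : Measurable fun f : Fin n → Ω × Ω ↦ (t, fun j ↦ (f j).2)))

lemma lintegral_pi_pairLaw_kernelProd [IsProbabilityMeasure μ] (x : Ω) {n : ℕ} (c : Fin n → Bool)
    (s t : Ω) :
    ∫⁻ f, kernelProd K x s (fun j ↦ (f j).1) * kernelProd K x t (fun j ↦ (f j).2)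
      ∂(Measure.pi fun j ↦ pairLaw μ (c j)) = pairIntegral μ K x (List.ofFn c) s t := by
  induction n generalizing s t with
  | zero => simp [kernelProd, pairIntegral]
  | succ n ih =>
    have split := (measurePreserving_piFinSuccAbove (fun j ↦ pairLaw μ (c j)) 0).symm
    rw [← split.lintegral_comp (measurable_kernelProd_mul_kernelProd hK x s t), List.ofFn_succ,
      pairIntegral]
    refine (lintegral_prod _ ((measurable_kernelProd_mul_kernelProd hK x s t).comp
      (MeasurableEquiv.measurable _)).aemeasurable).trans ?_
    refine lintegral_congr fun p ↦ ?_
    have measurable_rest := measurable_kernelProd_mul_kernelProd hK x (n := n) p.1 p.2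
    simp only [← ih, Fin.succAbove_zero]
    rw [← lintegral_const_mul _ measurable_rest]
    refine lintegral_congr fun f ↦ ?_
    exact mul_mul_mul_comm _ _ _ _

lemma lintegral_iterKernel_mul_sum [SFinite μ] {ι : Type*} (S : Finset ι) (c : ι → ℝ≥0∞)
    (m : ι → ℕ) (l : ℕ) (s x : Ω) :
    ∫⁻ u, iterKernel μ K l s u * ∑ i ∈ S, c i * iterKernel μ K (m i) u x ∂μ =
      ∑ i ∈ S, c i * iterKernel μ K (l + m i + 1) s x := by
  have measurable_prod (i : ι) :
      Measurable fun u ↦ iterKernel μ K l s u * iterKernel μ K (m i) u x :=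
    (measurable_iterKernel hK l).of_uncurry_left.mul
      (measurable_iterKernel hK (m i)).of_uncurry_right
  simp only [← lintegral_iterKernel_mul_iterKernel hK, Finset.mul_sum, mul_left_comm _ (c _)]
  rw [lintegral_finsetSum _ fun i _ ↦ (measurable_prod i).const_mul _]
  exact Finset.sum_congr rfl fun i _ ↦ lintegral_const_mul _ (measurable_prod i)

section Square

variable [SFinite μ]
  (hsq : ∀ l s u, iterKernel μ K l s u ^ 2 = l.centralBinom * iterKernel μ K (2 * l) s u)
include hsq

lemma sum_pairIntegral_replicate_false_append_true {ι : Type*} (S : Finset ι) (b : ι → List Bool)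
    (l : ℕ) (s x : Ω) :
    ∑ i ∈ S, pairIntegral μ K x (List.replicate l false ++ true :: b i) s s =
      l.centralBinom * ∫⁻ u, iterKernel μ K (2 * l) s u * ∑ i ∈ S, pairIntegral μ K x (b i) u u
        ∂μ := by
  have measurable_prod (i : ι) : Measurable fun u ↦
      iterKernel μ K (2 * l) s u * pairIntegral μ K x (b i) u u :=
    (measurable_iterKernel hK (2 * l)).of_uncurry_left.mul
      ((measurable_pairIntegral hK x (b i)).comp (by fun_prop : Measurable fun u : Ω ↦ (u, u)))
  simp only [pairIntegral_replicate_false_append_true hK, ← pow_two, hsq, mul_assoc]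
  simp only [Finset.mul_sum, lintegral_const_mul _ (measurable_prod _),
    lintegral_finsetSum _ fun i _ ↦ measurable_prod i]

-- Splitting at the first shared step gives the convolution recursion of the powers of
-- `strongFixedFreeSeries`.
lemma sum_pairIntegral_strongFixedPattern (n : ℕ) (s x : Ω) :
    ∑ σ : Equiv.Perm (Fin n), pairIntegral μ K x (strongFixedPattern σ) s s =
      ∑ p ∈ antidiagonal n, (PowerSeries.coeff p.2 (strongFixedFreeSeries ^ (p.1 + 1)) : ℕ) *
        iterKernel μ K (p.1 + 2 * p.2) s x := by
  induction n using Nat.strong_induction_on generalizing s with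
  | _ n ih =>
  rcases n with _ | n
  · have square : K s x ^ 2 = K s x := by simpa [iterKernel] using hsq 0 s x
    simp [strongFixedPattern, pairIntegral, iterKernel, strongFixedFreeSeries,
      card_strongFixedFree_zero, ← pow_two, square]
  rw [sum_strongFixedPattern_succ n fun b ↦ pairIntegral μ K x b s s,
    Finset.Nat.sum_antidiagonal_succ]
  congr 1
  · rw [pairIntegral_replicate_false hK, ← pow_two, hsq]
    simp [strongFixedFreeSeries, mul_assoc]
  let term (j k m : ℕ) : ℝ≥0∞ := PowerSeries.coeff j strongFixedFreeSeries *
    PowerSeries.coeff m (strongFixedFreeSeries ^ (k + 1)) *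
      iterKernel μ K (k + 1 + 2 * (j + m)) s x
  have block (p : ℕ × ℕ) (hp : p ∈ antidiagonal n) :
      (strongFixedFree p.1).card • ∑ β : Equiv.Perm (Fin p.2),
        pairIntegral μ K x (List.replicate p.1 false ++ true :: strongFixedPattern β) s s =
      ∑ q ∈ antidiagonal p.2, term p.1 q.1 q.2 := by
    have lt : p.2 < n + 1 := by grind [mem_antidiagonal]
    rw [sum_pairIntegral_replicate_false_append_true hK hsq]
    simp only [ih p.2 lt]
    rw [lintegral_iterKernel_mul_sum hK, nsmul_eq_mul, Finset.mul_sum, Finset.mul_sum]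
    refine Finset.sum_congr rfl fun q _ ↦ ?_
    rw [show 2 * p.1 + (q.1 + 2 * q.2) + 1 = q.1 + 1 + 2 * (p.1 + q.2) by ring]
    simp [term, strongFixedFreeSeries, mul_assoc]
  rw [Finset.sum_congr rfl block, sum_antidiagonal_antidiagonal_comm n term]
  refine Finset.sum_congr rfl fun p _ ↦ ?_
  rw [pow_succ' _ (p.1 + 1), PowerSeries.coeff_mul, Nat.cast_sum, Finset.sum_mul]
  refine Finset.sum_congr rfl fun q hq ↦ ?_
  rw [← mem_antidiagonal.1 hq, Nat.cast_mul]

end Square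

end PathIntegrals

section SecondMoment

open scoped ENNReal

/-- The uniform distribution on `[0, 1]`. -/
noncomputable abbrev uniformMeasure : Measure ℝ := volume.restrict (Set.Icc 0 1)

instance : IsProbabilityMeasure uniformMeasure := ⟨by simp⟩

instance (n : ℕ) : IsProbabilityMeasure (cubeMeasure n) :=
  inferInstanceAs (IsProbabilityMeasure (Measure.pi fun _ : EdgeIdx n ↦ uniformMeasure))

/-- The indicator kernel of the order relation `s < u` on `[0, 1]`. -/
noncomputable def intervalKernel (s u : ℝ) : ℝ≥0∞ :=
  if 0 ≤ s ∧ s < u ∧ u ≤ 1 then 1 else 0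

lemma measurable_intervalKernel : Measurable (Function.uncurry intervalKernel) := by
  refine Measurable.ite ?_ measurable_const measurable_const
  exact (measurableSet_le measurable_const measurable_fst).inter
    ((measurableSet_lt measurable_fst measurable_snd).inter
      (measurableSet_le measurable_snd measurable_const))

lemma lintegral_Ioo_ofReal_pow_div_factorial (l : ℕ) {s u : ℝ} (h : s ≤ u) :
    ∫⁻ x in Set.Ioo s u, ENNReal.ofReal ((u - x) ^ l / l.factorial) =
      ENNReal.ofReal ((u - s) ^ (l + 1) / (l + 1).factorial) := by
  have continuous_pow_div : Continuous fun x ↦ (u - x) ^ l / l.factorial := by fun_prop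
  have nonneg : ∀ᵐ x ∂(volume.restrict (Set.Ioc s u)), 0 ≤ (u - x) ^ l / l.factorial :=
    ae_restrict_of_forall_mem measurableSet_Ioc fun x hx ↦
      div_nonneg (pow_nonneg (sub_nonneg.2 hx.2) l) (Nat.cast_nonneg _)
  rw [Measure.restrict_congr_set Ioo_ae_eq_Ioc, ← ofReal_integral_eq_lintegral_ofReal
    (continuous_pow_div.integrableOn_Ioc) nonneg, ← intervalIntegral.integral_of_le h,
    intervalIntegral.integral_div, intervalIntegral.integral_comp_sub_left (fun x ↦ x ^ l),
    integral_pow, sub_self, Nat.factorial_succ]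
  congr 1
  push_cast
  field_simp
  simp

lemma iterKernel_intervalKernel (l : ℕ) (s u : ℝ) :
    iterKernel uniformMeasure intervalKernel l s u =
      if 0 ≤ s ∧ s < u ∧ u ≤ 1 then ENNReal.ofReal ((u - s) ^ l / l.factorial) else 0 := by
  induction l generalizing s with
  | zero => simp [iterKernel, intervalKernel]
  | succ l ih =>
    simp only [iterKernel, ih, intervalKernel]
    split_ifs with h
    · have integrand_eq : (fun x ↦ (if 0 ≤ s ∧ s < x ∧ x ≤ 1 then (1 : ℝ≥0∞) else 0) *
          if 0 ≤ x ∧ x < u ∧ u ≤ 1 then ENNReal.ofReal ((u - x) ^ l / l.factorial) else 0) =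
          (Set.Ioo s u).indicator fun x ↦ ENNReal.ofReal ((u - x) ^ l / l.factorial) := by
        ext x
        rw [Set.indicator_apply, ite_zero_mul_ite_zero, one_mul]
        refine if_congr ?_ rfl rfl
        grind
      rw [integrand_eq, lintegral_indicator measurableSet_Ioo, Measure.restrict_restrict
        measurableSet_Ioo, Set.inter_eq_left.2 (by grind),
        lintegral_Ioo_ofReal_pow_div_factorial l h.2.1.le]
    · refine (lintegral_congr fun x ↦ ?_).trans lintegral_zero
      rw [ite_zero_mul_ite_zero, if_neg (by grind)]

lemma iterKernel_intervalKernel_sq (l : ℕ) (s u : ℝ) :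
    iterKernel uniformMeasure intervalKernel l s u ^ 2 =
      l.centralBinom * iterKernel uniformMeasure intervalKernel (2 * l) s u := by
  simp only [iterKernel_intervalKernel]
  split_ifs with h
  · have nonneg : 0 ≤ u - s := sub_nonneg.2 h.2.1.le
    have choose_mul : (l.centralBinom : ℝ) * l.factorial * l.factorial = (2 * l).factorial := by
      rw [l.centralBinom_eq_two_mul_choose, two_mul]
      exact mod_cast Nat.add_choose_mul_factorial_mul_factorial l l
    have := l.centralBinom_ne_zero
    rw [← ENNReal.ofReal_pow (by positivity), ← ENNReal.ofReal_natCast,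
      ← ENNReal.ofReal_mul (Nat.cast_nonneg _), ← choose_mul, mul_comm 2 l, pow_mul]
    congr 1
    field_simp
  · simp

lemma kernelProd_intervalKernel {n : ℕ} {s : ℝ} (hs : s ∈ Set.Ico 0 1) (f : Fin n → ℝ)
    (hf : ∀ j, f j ∈ Set.Ioo 0 1) :
    kernelProd intervalKernel 1 s f = if StrictMono f ∧ ∀ j, s < f j then 1 else 0 := by
  induction n generalizing s with
  | zero => simp [kernelProd, intervalKernel, hs.1, hs.2, Subsingleton.strictMono]
  | succ n ih =>
    rw [kernelProd, ih (Set.Ioo_subset_Ico_self (hf 0)) (Fin.tail f) fun j ↦ hf j.succ,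
      intervalKernel, ite_zero_mul_ite_zero, one_mul]
    refine if_congr ?_ rfl rfl
    rw [← Fin.cons_self_tail f, Fin.strictMono_cons, Fin.forall_fin_succ]
    simp only [Fin.cons_zero, Fin.cons_succ, Fin.tail_cons, hs.1, (hf 0).2.le, true_and, and_true]
    exact ⟨fun h ↦ ⟨h.2.symm, h.1, fun j ↦ h.1.trans (h.2.2 j)⟩, fun h ↦ ⟨h.2.1, h.1.symm⟩⟩

lemma card_fst_pathEdge {n : ℕ} (σ : Equiv.Perm (Fin n)) (j : Fin n) :
    (pathEdge n σ j).1.card = j := by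
  rw [pathEdge, initSeg, Finset.card_image_of_injective _ σ.injective, Finset.filter_gt_eq_Iio,
    Fin.card_Iio]

lemma eq_of_pathEdge_eq {n : ℕ} {σ τ : Equiv.Perm (Fin n)} {i j : Fin n}
    (h : pathEdge n σ i = pathEdge n τ j) : i = j := by
  rw [Fin.ext_iff, ← card_fst_pathEdge σ, h, card_fst_pathEdge]

lemma measurableSet_accessible {n : ℕ} (σ : Equiv.Perm (Fin n)) :
    MeasurableSet {ω | Accessible n σ ω} := by
  simp only [Accessible, StrictMono, Set.ofPred_forall]
  exact .iInter fun i ↦ .iInter fun j ↦ .iInter fun _ ↦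
    measurableSet_lt (measurable_pi_apply _) (measurable_pi_apply _)

lemma ae_cubeMeasure_mem_Ioo (n : ℕ) : ∀ᵐ ω ∂(cubeMeasure n), ∀ e, ω e ∈ Set.Ioo (0 : ℝ) 1 := by
  rw [ae_all_iff]
  intro e
  refine (measurePreserving_eval (fun _ : EdgeIdx n ↦ uniformMeasure) e).quasiMeasurePreserving.ae
    (p := (· ∈ Set.Ioo (0 : ℝ) 1)) ?_
  rw [uniformMeasure, ← Measure.restrict_congr_set Ioo_ae_eq_Icc]
  exact ae_restrict_mem measurableSet_Ioo

lemma map_cubeMeasure_pathEdge {n : ℕ} (σ τ : Equiv.Perm (Fin n)) :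
    (cubeMeasure n).map (fun ω j ↦ (ω (pathEdge n σ j), ω (pathEdge n τ j))) =
      Measure.pi fun j ↦ pairLaw uniformMeasure (decide (IsStrongFixedPoint (σ⁻¹ * τ) j)) := by
  rw [cubeMeasure, ← Measure.infinitePi_eq_pi, ← Measure.infinitePi_eq_pi,
    map_infinitePi_prodMk_eq_infinitePi_pairLaw uniformMeasure (fun _ _ ↦ eq_of_pathEdge_eq)
      (fun _ _ ↦ eq_of_pathEdge_eq) (fun _ _ ↦ eq_of_pathEdge_eq)]
  simp only [pathEdge_eq_iff]

lemma cubeMeasure_accessible_inter_accessible {n : ℕ} (σ τ : Equiv.Perm (Fin n)) :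
    cubeMeasure n ({ω | Accessible n σ ω} ∩ {ω | Accessible n τ ω}) =
      pairIntegral uniformMeasure intervalKernel 1 (strongFixedPattern (σ⁻¹ * τ)) 0 0 := by
  rw [strongFixedPattern, ← lintegral_pi_pairLaw_kernelProd measurable_intervalKernel,
    ← map_cubeMeasure_pathEdge, lintegral_map (measurable_kernelProd_mul_kernelProd
      measurable_intervalKernel 1 0 0) (by fun_prop), ← lintegral_indicator_one
      ((measurableSet_accessible σ).inter (measurableSet_accessible τ))]
  refine lintegral_congr_ae ?_
  filter_upwards [ae_cubeMeasure_mem_Ioo n] with ω hω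
  have kernelProd_eq (ρ : Equiv.Perm (Fin n)) :
      kernelProd intervalKernel 1 0 (fun j ↦ ω (pathEdge n ρ j)) =
        {ω | Accessible n ρ ω}.indicator 1 ω := by
    classical
    rw [kernelProd_intervalKernel (by simp) _ fun j ↦ hω _, Set.indicator_apply]
    exact if_congr (and_iff_left fun j ↦ (hω _).1) rfl rfl
  rw [kernelProd_eq, kernelProd_eq, ← Pi.mul_apply, ← Set.inter_indicator_one]

lemma integral_natCard_sq {Ω ι : Type*} [MeasurableSpace Ω] [Fintype ι] (μ : Measure Ω)
    [IsFiniteMeasure μ] {A : ι → Set Ω} (hA : ∀ i, MeasurableSet (A i)) :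
    ∫ ω, (Nat.card {i // ω ∈ A i} : ℝ) ^ 2 ∂μ = ∑ i, ∑ j, μ.real (A i ∩ A j) := by
  classical
  have card_eq (ω : Ω) : (Nat.card {i // ω ∈ A i} : ℝ) = ∑ i, (A i).indicator 1 ω := by
    simp [Nat.card_eq_fintype_card, Fintype.card_subtype, Set.indicator_apply]
  have integrable_indicator (i j : ι) : Integrable ((A i ∩ A j).indicator (1 : Ω → ℝ)) μ :=
    (integrable_const 1).indicator ((hA i).inter (hA j))
  have indicator_mul (i j : ι) (ω : Ω) : (A i).indicator 1 ω * (A j).indicator 1 ω =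
      (A i ∩ A j).indicator (1 : Ω → ℝ) ω := by
    simp [Set.inter_indicator_one]
  simp only [card_eq, pow_two, Finset.sum_mul_sum, indicator_mul]
  rw [integral_finsetSum _ fun i _ ↦ integrable_finsetSum _ fun j _ ↦ integrable_indicator i j]
  refine Finset.sum_congr rfl fun i _ ↦ ?_
  rw [integral_finsetSum _ fun j _ ↦ integrable_indicator i j]
  exact Finset.sum_congr rfl fun j _ ↦ integral_indicator_one ((hA i).inter (hA j))

lemma sum_cubeMeasure_real_accessible_inter_accessible {n : ℕ} (σ : Equiv.Perm (Fin n)) :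
    ∑ τ, (cubeMeasure n).real ({ω | Accessible n σ ω} ∩ {ω | Accessible n τ ω}) =
      ∑ p ∈ antidiagonal n, (PowerSeries.coeff p.2 (strongFixedFreeSeries ^ (p.1 + 1)) : ℕ) /
        ((p.1 + 2 * p.2).factorial : ℝ) := by
  let pairProb (ρ : Equiv.Perm (Fin n)) :=
    pairIntegral uniformMeasure intervalKernel 1 (strongFixedPattern ρ) 0 0
  have sum_translate : ∑ τ, pairProb (σ⁻¹ * τ) = ∑ ρ, pairProb ρ :=
    Equiv.sum_comp (Equiv.mulLeft σ⁻¹) pairProb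
  simp only [Measure.real]
  rw [← ENNReal.toReal_sum fun _ _ ↦ measure_ne_top _ _]
  simp only [cubeMeasure_accessible_inter_accessible]
  rw [sum_translate,
    sum_pairIntegral_strongFixedPattern measurable_intervalKernel iterKernel_intervalKernel_sq,
    ENNReal.toReal_sum (by simp [iterKernel_intervalKernel, ENNReal.mul_eq_top])]
  refine Finset.sum_congr rfl fun p _ ↦ ?_
  rw [iterKernel_intervalKernel, if_pos (by simp), ENNReal.toReal_mul, ENNReal.toReal_natCast,
    ENNReal.toReal_ofReal (by positivity), sub_zero, one_pow, mul_one_div]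

lemma integral_X_sq_eq_sum_momentTerm (n : ℕ) :
    ∫ ω, (X n ω : ℝ) ^ 2 ∂(cubeMeasure n) = ∑ p ∈ antidiagonal n, momentTerm p.1 p.2 := by
  refine (integral_natCard_sq (cubeMeasure n) measurableSet_accessible).trans ?_
  simp only [sum_cubeMeasure_real_accessible_inter_accessible, Finset.sum_const, Finset.card_univ,
    Fintype.card_perm, Fintype.card_fin, Finset.smul_sum]
  refine Finset.sum_congr rfl fun p hp ↦ ?_
  rw [momentTerm, mem_antidiagonal.1 hp, nsmul_eq_mul, mul_div_assoc]

end SecondMoment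

end RandomHypercube

open RandomHypercube in
/-- The second moment of the number of accessible direct paths converges to 5. -/
theorem secondMoment_tendsto_five :
    Tendsto (fun n : ℕ => ∫ ω, ((X n ω : ℝ)) ^ 2 ∂(cubeMeasure n)) atTop (nhds 5) := by
  simp_rw [integral_X_sq_eq_sum_momentTerm]
  exact tendsto_sum_antidiagonal_momentTerm
end
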